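/- arXiv:1701.07682 — 4 statements merged into one kernel-verified Lean document; each statement's English description precedes it below -/
import Mathlib

section
/- Let λ be a real number with λ > -1/2 and let n ≥ 1 be a natural number. Then (c_n(λ))² = μ_max(B_n), where μ_max(B_n) is the largest eigenvalue of the symmetric positive definite matrix B_n. -/
open Polynomial Filter

/-- The weighted `L_2` norm with the Gegenbauer weight `w_lam(t) = (1-t^2)^(lam-1/2)`. -/
noncomputable def gegNorm (lam : ℝ) (f : ℝ → ℝ) : ℝ :=
  (∫ x in (-1:ℝ)..1, (f x) ^ 2 * (1 - x ^ 2) ^ (lam - 1/2)) ^ ((1:ℝ)/2)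

/-- The best Markov constant `c_n(lam)` in `‖p'‖ ≤ c_n(lam) ‖p‖` for polynomials of degree ≤ n. -/
noncomputable def markovConst (lam : ℝ) (n : ℕ) : ℝ :=
  sSup { r : ℝ | ∃ p : Polynomial ℝ, p ≠ 0 ∧ p.natDegree ≤ n ∧
    r = gegNorm lam (fun x => (Polynomial.derivative p).eval x) /
        gegNorm lam (fun x => p.eval x) }
/-- `h_x^2 = Γ(x+2λ)/((x+λ)Γ(x+1))`. -/
noncomputable def hsq (lam x : ℝ) : ℝ :=
  Real.Gamma (x + 2*lam) / ((x + lam) * Real.Gamma (x + 1))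

/-- `α_k = (2k-1+λ) h_{2k-1}`. -/
noncomputable def gegAlpha (lam : ℝ) (k : ℕ) : ℝ :=
  (2*(k:ℝ) - 1 + lam) * Real.sqrt (hsq lam (2*(k:ℝ) - 1))

/-- `β_k = 1/h_{2k}`. -/
noncomputable def gegBeta (lam : ℝ) (k : ℕ) : ℝ :=
  1 / Real.sqrt (hsq lam (2*(k:ℝ)))

/-- `α̃_k^2 = ((2k-2+λ) h_{2k-2})^2`, with `α̃_1^2 = λΓ(2λ) = Γ(2λ+1)/2`. -/
noncomputable def gegAlphaTildeSq (lam : ℝ) (k : ℕ) : ℝ :=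
  if k = 1 then Real.Gamma (2*lam + 1) / 2
  else (2*(k:ℝ) - 2 + lam)^2 * hsq lam (2*(k:ℝ) - 2)

/-- `β̃_k = 1/h_{2k-1}`. -/
noncomputable def gegBetaTilde (lam : ℝ) (k : ℕ) : ℝ :=
  1 / Real.sqrt (hsq lam (2*(k:ℝ) - 1))

/-- The matrix `A_m` with entries `a_{kj} = (Σ_{i=1}^{min(k,j)} α_i^2) β_k β_j` (1-based). -/
noncomputable def Amat (lam : ℝ) (m : ℕ) : Matrix (Fin m) (Fin m) ℝ :=
  fun k j => (∑ i ∈ Finset.Icc 1 (min (k.val+1) (j.val+1)), (gegAlpha lam i)^2) *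
    gegBeta lam (k.val+1) * gegBeta lam (j.val+1)

/-- The matrix `Ã_m` with entries `ã_{kj} = (Σ_{i=1}^{min(k,j)} α̃_i^2) β̃_k β̃_j` (1-based). -/
noncomputable def AmatTilde (lam : ℝ) (m : ℕ) : Matrix (Fin m) (Fin m) ℝ :=
  fun k j => (∑ i ∈ Finset.Icc 1 (min (k.val+1) (j.val+1)), gegAlphaTildeSq lam i) *
    gegBetaTilde lam (k.val+1) * gegBetaTilde lam (j.val+1)

/-- `B_n = 4 A_m` for `n = 2m` and `B_n = 4 Ã_m` for `n = 2m-1`; in both cases `m = (n+1)/2`. -/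
noncomputable def Bmat (lam : ℝ) (n : ℕ) : Matrix (Fin ((n+1)/2)) (Fin ((n+1)/2)) ℝ :=
  if n % 2 = 0 then (4:ℝ) • Amat lam ((n+1)/2) else (4:ℝ) • AmatTilde lam ((n+1)/2)

/-- Maximum absolute row-sum norm. -/
noncomputable def rowSumNorm {m : ℕ} (A : Matrix (Fin m) (Fin m) ℝ) : ℝ :=
  ⨆ k, ∑ j, |A k j|

/-- Squared Frobenius norm. -/
noncomputable def frobSq {m : ℕ} (A : Matrix (Fin m) (Fin m) ℝ) : ℝ :=
  ∑ k, ∑ j, (A k j)^2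


/-- The Gegenbauer polynomials `C_n^lam / lam` for `n ≥ 1`, in a normalization that stays
meaningful at `lam = 0`; the value at `n = 0` is set to `0`. -/
noncomputable def gegPoly (lam : ℝ) : ℕ → ℝ[X]
  | 0 => 0
  | 1 => 2 * X
  | 2 => 2 * (C lam + 1) * X ^ 2 - 1
  | n + 3 => C (1 / ((n : ℝ) + 3)) * (2 * ((n : ℝ[X]) + 2 + C lam) * X * gegPoly lam (n + 2) -
      ((n : ℝ[X]) + 1 + 2 * C lam) * gegPoly lam (n + 1))

/-- The orthogonal polynomials `(n + lam) * C_n^lam / lam`, including `n = 0`. -/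
noncomputable def gegScaled (lam : ℝ) : ℕ → ℝ[X]
  | 0 => 1
  | n + 1 => ((n : ℝ[X]) + 1 + C lam) * gegPoly lam (n + 1)

theorem gegPoly_recurrence (lam : ℝ) (n : ℕ) :
    ((n : ℝ[X]) + 3) * gegPoly lam (n + 3) =
      2 * ((n : ℝ[X]) + 2 + C lam) * X * gegPoly lam (n + 2) -
        ((n : ℝ[X]) + 1 + 2 * C lam) * gegPoly lam (n + 1) := by
  have h : ((n : ℝ[X]) + 3) * C (1 / ((n : ℝ) + 3)) = 1 := by
    have h' : ((n : ℝ[X]) + 3) = C ((n : ℝ) + 3) := by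
      rw [C_add, C_eq_natCast, map_ofNat]
    rw [h', ← C_mul, mul_one_div_cancel (by positivity), C_1]
  rw [gegPoly, ← mul_assoc, h, one_mul]

theorem gegPoly_derivative_identities (lam : ℝ) (n : ℕ) :
    X * derivative (gegPoly lam (n + 1)) - derivative (gegPoly lam n) =
        ((n : ℝ[X]) + 1) * gegPoly lam (n + 1) ∧
      X * derivative (gegPoly lam (n + 2)) - derivative (gegPoly lam (n + 1)) =
        ((n : ℝ[X]) + 2) * gegPoly lam (n + 2) ∧
      derivative (gegPoly lam (n + 2)) - X * derivative (gegPoly lam (n + 1)) =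
        ((n : ℝ[X]) + 1 + 2 * C lam) * gegPoly lam (n + 1) := by
  induction n with
  | zero =>
    simp only [gegPoly]
    refine ⟨?_, ?_, ?_⟩ <;> simp [derivative_mul] <;> ring
  | succ n ih =>
    obtain ⟨-, h3, h4⟩ := ih
    have hrec := gegPoly_recurrence lam n
    have hd := congrArg derivative hrec
    simp only [derivative_mul, derivative_sub, derivative_add, derivative_natCast,
      derivative_C, derivative_X, derivative_ofNat, derivative_one] at hd
    have hne : ((n : ℝ[X]) + 3) ≠ 0 := by exact_mod_cast (by omega : n + 3 ≠ 0)
    have h4' : derivative (gegPoly lam (n + 3)) - X * derivative (gegPoly lam (n + 2)) =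
        ((n : ℝ[X]) + 2 + 2 * C lam) * gegPoly lam (n + 2) := by
      apply mul_left_cancel₀ hne
      linear_combination hd + ((n : ℝ[X]) + 1 + 2 * C lam) * h3
    refine ⟨?_, ?_, ?_⟩
    · push_cast; linear_combination h3
    · push_cast
      linear_combination X * h4' - hrec + X * h3 - h4
    · push_cast
      linear_combination h4'

theorem gegPoly_ode (lam : ℝ) (n : ℕ) :
    (1 - X ^ 2) * derivative (derivative (gegPoly lam n)) -
        (2 * C lam + 1) * X * derivative (gegPoly lam n) =
      -((n : ℝ[X]) * ((n : ℝ[X]) + 2 * C lam)) * gegPoly lam n := by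
  match n with
  | 0 => simp [gegPoly]
  | 1 => simp [gegPoly, derivative_mul]; ring
  | n + 2 =>
    obtain ⟨-, h3, h4⟩ := gegPoly_derivative_identities lam n
    have h3' := congrArg derivative h3
    have h4' := congrArg derivative h4
    simp only [derivative_mul, derivative_sub, derivative_add, derivative_natCast,
      derivative_C, derivative_X, derivative_ofNat, derivative_one] at h3' h4'
    push_cast
    linear_combination h4' - X * h3' - ((n : ℝ[X]) + 2 + 2 * C lam) * h3

theorem derivative_gegPoly_add_two (lam : ℝ) (n : ℕ) :
    derivative (gegPoly lam (n + 2)) =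
      derivative (gegPoly lam n) + 2 * gegScaled lam (n + 1) := by
  obtain ⟨h3, -, h4⟩ := gegPoly_derivative_identities lam n
  rw [gegScaled]
  linear_combination h3 + h4

theorem derivative_gegPoly (lam : ℝ) (n : ℕ) :
    derivative (gegPoly lam n) =
      2 * ∑ l ∈ Finset.range n, if Odd (l + n) then gegScaled lam l else 0 := by
  induction n using Nat.twoStepInduction with
  | zero => simp [gegPoly]
  | one => simp [gegPoly, gegScaled, derivative_mul]
  | more n ih _ =>
    have h1 : Odd (n + 1 + (n + 2)) := ⟨n + 1, by ring⟩
    have h2 : ¬ Odd (n + (n + 2)) := by rw [Nat.not_odd_iff_even]; exact ⟨n + 1, by ring⟩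
    have h3 (l : ℕ) : Odd (l + (n + 2)) ↔ Odd (l + n) := by
      rw [← add_assoc, Nat.odd_add]; simp
    rw [derivative_gegPoly_add_two, ih, Finset.sum_range_succ, Finset.sum_range_succ,
      if_pos h1, if_neg h2]
    simp only [h3]
    ring

theorem gegScaled_ode (lam : ℝ) (n : ℕ) :
    (1 - X ^ 2) * derivative (derivative (gegScaled lam n)) -
        (2 * C lam + 1) * X * derivative (gegScaled lam n) =
      -((n : ℝ[X]) * ((n : ℝ[X]) + 2 * C lam)) * gegScaled lam n := by
  match n with
  | 0 => simp [gegScaled]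
  | n + 1 =>
    have h := gegPoly_ode lam (n + 1)
    simp only [gegScaled, derivative_mul, derivative_add, derivative_natCast,
      derivative_C, derivative_one, derivative_zero]
    linear_combination ((n : ℝ[X]) + 1 + C lam) * h

theorem gegPoly_add_three (lam : ℝ) (n : ℕ) :
    gegPoly lam (n + 3) =
      C (2 * (n + 2 + lam) / (n + 3)) * (X * gegPoly lam (n + 2)) -
        C ((n + 1 + 2 * lam) / (n + 3)) * gegPoly lam (n + 1) := by
  rw [gegPoly]
  simp only [div_eq_mul_inv, C_mul, C_add, C_eq_natCast, map_ofNat, C_1, one_mul]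
  ring

theorem natDegree_gegPoly_le (lam : ℝ) : ∀ n : ℕ, (gegPoly lam n).natDegree ≤ n
  | 0 => by simp [gegPoly]
  | 1 => by rw [gegPoly]; compute_degree
  | 2 => by
    have h : gegPoly lam 2 = C (2 * (lam + 1)) * X ^ 2 - C 1 := by
      simp [gegPoly, C_mul, map_ofNat]
    rw [h]
    compute_degree
  | n + 3 => by
    rw [gegPoly_add_three]
    refine (natDegree_sub_le _ _).trans (max_le ((natDegree_C_mul_le _ _).trans ?_)
      ((natDegree_C_mul_le _ _).trans ?_))
    · have h := natDegree_gegPoly_le lam (n + 2)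
      refine natDegree_mul_le.trans ?_
      rw [natDegree_X]
      omega
    · have h := natDegree_gegPoly_le lam (n + 1)
      omega

theorem coeff_gegPoly_pos {lam : ℝ} (hlam : -(1 / 2 : ℝ) < lam) :
    ∀ n : ℕ, 0 < (gegPoly lam (n + 1)).coeff (n + 1)
  | 0 => by
    have h : (gegPoly lam (0 + 1)) = C 2 * X := by simp [gegPoly, map_ofNat]
    simp [h]
  | 1 => by
    have h : (gegPoly lam (1 + 1)) = C (2 * (lam + 1)) * X ^ 2 - C 1 := by
      simp [gegPoly, map_ofNat]
    rw [h, coeff_sub, coeff_C_mul, coeff_C]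
    simp
    linarith
  | n + 2 => by
    have h := coeff_gegPoly_pos hlam (n + 1)
    have h0 : (gegPoly lam (n + 1)).coeff (n + 3) = 0 :=
      coeff_eq_zero_of_natDegree_lt ((natDegree_gegPoly_le lam (n + 1)).trans_lt (by omega))
    rw [show n + 2 + 1 = n + 3 from rfl, gegPoly_add_three, coeff_sub, coeff_C_mul, coeff_C_mul,
      coeff_X_mul, h0, mul_zero, sub_zero]
    have : (0 : ℝ) ≤ n := n.cast_nonneg
    exact mul_pos (div_pos (by linarith) (by linarith)) h

theorem exists_eq_sum_gegPoly {lam : ℝ} (hlam : -(1 / 2 : ℝ) < lam) (n : ℕ) (p : ℝ[X])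
    (hp : p.natDegree ≤ n) :
    ∃ (a : ℝ) (b : ℕ → ℝ), p = C a + ∑ i ∈ Finset.range n, C (b i) * gegPoly lam (i + 1) := by
  induction n generalizing p with
  | zero => exact ⟨p.coeff 0, 0, by simpa using eq_C_of_natDegree_le_zero hp⟩
  | succ n ih =>
    have hpos := coeff_gegPoly_pos hlam n
    set t := p.coeff (n + 1) / (gegPoly lam (n + 1)).coeff (n + 1) with ht
    have hq : (p - C t * gegPoly lam (n + 1)).natDegree ≤ n := by
      rw [natDegree_le_iff_coeff_eq_zero]
      intro N hN
      rcases (Nat.succ_le_of_lt hN).eq_or_lt with h | h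
      · rw [← h, coeff_sub, coeff_C_mul, ht, Nat.succ_eq_add_one, div_mul_cancel₀ _ hpos.ne',
          sub_self]
      · rw [coeff_sub, coeff_C_mul, coeff_eq_zero_of_natDegree_lt (hp.trans_lt h),
          coeff_eq_zero_of_natDegree_lt ((natDegree_gegPoly_le lam (n + 1)).trans_lt h),
          mul_zero, sub_zero]
    obtain ⟨a, b, hab⟩ := ih _ hq
    refine ⟨a, Function.update b n t, ?_⟩
    rw [Finset.sum_range_succ, Function.update_self, ← add_assoc]
    rw [Finset.sum_congr rfl (g := fun i => C (b i) * gegPoly lam (i + 1))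
      (fun i hi => by rw [Function.update_of_ne (Finset.mem_range.1 hi).ne]), ← hab]
    ring

theorem intervalIntegrable_gegWeight {lam : ℝ} (hlam : -(1 / 2 : ℝ) < lam) :
    IntervalIntegrable (fun x : ℝ => (1 - x ^ 2) ^ (lam - 1 / 2)) MeasureTheory.volume (-1) 1 := by
  have he : -1 < lam - 1 / 2 := by linarith
  have hright : IntervalIntegrable (fun x : ℝ => (1 - x ^ 2) ^ (lam - 1 / 2))
      MeasureTheory.volume 0 1 := by
    have h1 : IntervalIntegrable (fun x : ℝ => (1 - x) ^ (lam - 1 / 2))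
        MeasureTheory.volume 0 1 := by
      simpa using ((intervalIntegral.intervalIntegrable_rpow' (a := 0) (b := 1) he).comp_sub_left
        1).symm
    have h2 : ContinuousOn (fun x : ℝ => (1 + x) ^ (lam - 1 / 2)) (Set.uIcc 0 1) := by
      rw [Set.uIcc_of_le zero_le_one]
      exact (by fun_prop : Continuous fun x : ℝ => 1 + x).continuousOn.rpow_const
        fun x hx => Or.inl (by linarith [hx.1])
    refine (h1.mul_continuousOn h2).congr fun x hx => ?_
    rw [Set.uIoc_of_le zero_le_one] at hx
    rw [← Real.mul_rpow (by linarith [hx.2]) (by linarith [hx.1])]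
    congr 1
    ring
  have hleft : IntervalIntegrable (fun x : ℝ => (1 - x ^ 2) ^ (lam - 1 / 2))
      MeasureTheory.volume (-1) 0 := by
    simpa using (hright.comp_sub_left 0).symm
  exact hleft.trans hright

theorem intervalIntegrable_eval_mul_gegWeight {lam : ℝ} (hlam : -(1 / 2 : ℝ) < lam) (p : ℝ[X]) :
    IntervalIntegrable (fun x : ℝ => p.eval x * (1 - x ^ 2) ^ (lam - 1 / 2))
      MeasureTheory.volume (-1) 1 :=
  (intervalIntegrable_gegWeight hlam).continuousOn_mul p.continuous.continuousOn

/-- Integration of polynomials against the Gegenbauer weight, as a linear functional. -/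
noncomputable def gegFunctional {lam : ℝ} (hlam : -(1 / 2 : ℝ) < lam) : ℝ[X] →ₗ[ℝ] ℝ where
  toFun p := ∫ x in (-1 : ℝ)..1, p.eval x * (1 - x ^ 2) ^ (lam - 1 / 2)
  map_add' p q := by
    simp only [eval_add, add_mul]
    exact intervalIntegral.integral_add (intervalIntegrable_eval_mul_gegWeight hlam p)
      (intervalIntegrable_eval_mul_gegWeight hlam q)
  map_smul' a p := by
    simp only [eval_smul, smul_eq_mul, mul_assoc, RingHom.id_apply]
    exact intervalIntegral.integral_const_mul _ _

theorem gegFunctional_C_mul {lam : ℝ} (hlam : -(1 / 2 : ℝ) < lam) (a : ℝ) (p : ℝ[X]) :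
    gegFunctional hlam (C a * p) = a * gegFunctional hlam p := by
  rw [← smul_eq_C_mul, map_smul, smul_eq_mul]

theorem gegNorm_eval {lam : ℝ} (hlam : -(1 / 2 : ℝ) < lam) (p : ℝ[X]) :
    gegNorm lam (fun x => p.eval x) = √(gegFunctional hlam (p * p)) := by
  rw [gegNorm, Real.sqrt_eq_rpow, gegFunctional]
  simp [pow_two]

theorem gegFunctional_one_pos {lam : ℝ} (hlam : -(1 / 2 : ℝ) < lam) :
    0 < gegFunctional hlam 1 := by
  refine intervalIntegral.intervalIntegral_pos_of_pos_on
    (intervalIntegrable_eval_mul_gegWeight hlam 1) (fun x hx => ?_) (by norm_num)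
  rw [eval_one, one_mul]
  exact Real.rpow_pos_of_pos (by nlinarith [hx.1, hx.2]) _

theorem gegFunctional_integration_by_parts {lam : ℝ} (hlam : -(1 / 2 : ℝ) < lam) (q : ℝ[X]) :
    gegFunctional hlam ((1 - X ^ 2) * derivative q) =
      (2 * lam + 1) * gegFunctional hlam (X * q) := by
  have key : gegFunctional hlam ((1 - X ^ 2) * derivative q - C (2 * lam + 1) * (X * q)) = 0 := by
    have hpos : 0 < lam + 1 / 2 := by linarith
    have h := intervalIntegral.integral_eq_sub_of_hasDerivAt_of_le
      (f := fun x : ℝ => q.eval x * (1 - x ^ 2) ^ (lam + 1 / 2)) (by norm_num : (-1 : ℝ) ≤ 1)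
      (q.continuous.mul ((by fun_prop : Continuous fun x : ℝ => 1 - x ^ 2).rpow_const
        fun _ => Or.inr hpos.le)).continuousOn
      (fun x hx => ?_)
      (intervalIntegrable_eval_mul_gegWeight hlam
        ((1 - X ^ 2) * derivative q - C (2 * lam + 1) * (X * q)))
    · refine h.trans ?_
      simp [Real.zero_rpow (by linarith : 0 < lam + 2⁻¹).ne']
    · have hx1 : 0 < 1 - x ^ 2 := by nlinarith [hx.1, hx.2]
      have hw : HasDerivAt (fun x : ℝ => 1 - x ^ 2) (-(2 * x)) x := by
        simpa using ((hasDerivAt_id x).pow 2).const_sub 1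
      refine ((q.hasDerivAt x).mul (hw.rpow_const (p := lam + 1 / 2)
        (Or.inl hx1.ne'))).congr_deriv ?_
      rw [show lam + 1 / 2 = (lam - 1 / 2) + 1 by ring, Real.rpow_add_one hx1.ne',
        add_sub_cancel_right]
      simp only [eval_sub, eval_mul, eval_one, eval_pow, eval_X, eval_C]
      ring
  rw [map_sub, gegFunctional_C_mul] at key
  linarith

theorem gegFunctional_selfAdjoint {lam : ℝ} (hlam : -(1 / 2 : ℝ) < lam) (p q : ℝ[X]) :
    gegFunctional hlam (((1 - X ^ 2) * derivative (derivative p) -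
        (2 * C lam + 1) * X * derivative p) * q) =
      -gegFunctional hlam ((1 - X ^ 2) * (derivative p * derivative q)) := by
  have h := gegFunctional_integration_by_parts hlam (derivative p * q)
  rw [← gegFunctional_C_mul, derivative_mul, mul_add, map_add] at h
  rw [show ((1 - X ^ 2) * derivative (derivative p) - (2 * C lam + 1) * X * derivative p) * q =
    (1 - X ^ 2) * (derivative (derivative p) * q) -
      C (2 * lam + 1) * (X * (derivative p * q)) by
    rw [C_add, C_mul, map_ofNat, C_1]; ring, map_sub]
  linarith

theorem gegFunctional_gegScaled_mul_of_ne {lam : ℝ} (hlam : -(1 / 2 : ℝ) < lam) {i j : ℕ}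
    (hij : i ≠ j) : gegFunctional hlam (gegScaled lam i * gegScaled lam j) = 0 := by
  have key (i j : ℕ) : (i : ℝ) * (i + 2 * lam) *
      gegFunctional hlam (gegScaled lam i * gegScaled lam j) = gegFunctional hlam
        ((1 - X ^ 2) * (derivative (gegScaled lam i) * derivative (gegScaled lam j))) := by
    have h := gegFunctional_selfAdjoint hlam (gegScaled lam i) (gegScaled lam j)
    rw [gegScaled_ode, show -((i : ℝ[X]) * ((i : ℝ[X]) + 2 * C lam)) * gegScaled lam i *
      gegScaled lam j = C (-(i * (i + 2 * lam))) * (gegScaled lam i * gegScaled lam j) by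
      rw [C_neg, C_mul, C_add, C_mul, map_ofNat, C_eq_natCast]; ring, gegFunctional_C_mul] at h
    linarith
  have hi := key i j
  have hj := key j i
  rw [mul_comm (gegScaled lam j), mul_comm (derivative (gegScaled lam j)), ← hi] at hj
  have h : ((i : ℝ) - j) * (i + j + 2 * lam) *
      gegFunctional hlam (gegScaled lam i * gegScaled lam j) = 0 := by linarith
  refine (mul_eq_zero.1 h).resolve_left (mul_ne_zero (sub_ne_zero.2 (by exact_mod_cast hij)) ?_)
  have : (1 : ℝ) ≤ (i : ℝ) + j := by exact_mod_cast (by omega : 1 ≤ i + j)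
  linarith

theorem gegScaled_succ (lam : ℝ) (n : ℕ) :
    gegScaled lam (n + 1) = C (n + 1 + lam) * gegPoly lam (n + 1) := by
  rw [gegScaled, C_add, C_add, C_eq_natCast, C_1]

theorem natCast_add_one_add_pos {lam : ℝ} (hlam : -(1 / 2 : ℝ) < lam) (n : ℕ) :
    0 < (n : ℝ) + 1 + lam := by
  linarith [(n.cast_nonneg : (0 : ℝ) ≤ n)]

theorem gegFunctional_gegPoly_mul_of_ne {lam : ℝ} (hlam : -(1 / 2 : ℝ) < lam) {i j : ℕ}
    (hij : i ≠ j) : gegFunctional hlam (gegPoly lam (i + 1) * gegPoly lam (j + 1)) = 0 := by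
  have h := gegFunctional_gegScaled_mul_of_ne hlam (i := i + 1) (j := j + 1) (by omega)
  rw [gegScaled_succ, gegScaled_succ, mul_mul_mul_comm, ← C_mul, gegFunctional_C_mul] at h
  exact (mul_eq_zero.1 h).resolve_left
    (mul_pos (natCast_add_one_add_pos hlam i) (natCast_add_one_add_pos hlam j)).ne'

theorem gegFunctional_gegPoly {lam : ℝ} (hlam : -(1 / 2 : ℝ) < lam) (i : ℕ) :
    gegFunctional hlam (gegPoly lam (i + 1)) = 0 := by
  have h := gegFunctional_gegScaled_mul_of_ne hlam (i := i + 1) (j := 0) (by omega)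
  rw [gegScaled_succ, gegScaled, mul_one, gegFunctional_C_mul] at h
  exact (mul_eq_zero.1 h).resolve_left (natCast_add_one_add_pos hlam i).ne'

/-- The constant relating `hsq` to the squared norms of the polynomials `gegPoly`. -/
noncomputable def gegConst {lam : ℝ} (hlam : -(1 / 2 : ℝ) < lam) : ℝ :=
  2 * gegFunctional hlam 1 / Real.Gamma (2 * lam + 1)

theorem gegConst_pos {lam : ℝ} (hlam : -(1 / 2 : ℝ) < lam) : 0 < gegConst hlam :=
  div_pos (mul_pos two_pos (gegFunctional_one_pos hlam)) (Real.Gamma_pos_of_pos (by linarith))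

theorem hsq_pos {lam x : ℝ} (hlam : -(1 / 2 : ℝ) < lam) (hx : 1 ≤ x) : 0 < hsq lam x :=
  div_pos (Real.Gamma_pos_of_pos (by linarith))
    (mul_pos (by linarith) (Real.Gamma_pos_of_pos (by linarith)))

theorem hsq_add_one {lam x : ℝ} (hlam : -(1 / 2 : ℝ) < lam) (hx : 1 ≤ x) :
    hsq lam (x + 1) = hsq lam x * ((x + lam) * (x + 2 * lam) / ((x + 1) * (x + 1 + lam))) := by
  have h0 : Real.Gamma (x + 1) ≠ 0 := (Real.Gamma_pos_of_pos (by linarith)).ne'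
  have h1 : x + 1 ≠ 0 := by linarith
  have h2 : x + lam ≠ 0 := by linarith
  have h3 : x + 1 + lam ≠ 0 := by linarith
  rw [hsq, hsq, Real.Gamma_add_one h1, add_right_comm, Real.Gamma_add_one (by linarith)]
  field_simp

theorem gegFunctional_gegPoly_sq {lam : ℝ} (hlam : -(1 / 2 : ℝ) < lam) (n : ℕ) :
    gegFunctional hlam (gegPoly lam (n + 1) * gegPoly lam (n + 1)) =
      gegConst hlam * hsq lam (n + 1) := by
  induction n with
  | zero =>
    have h := gegFunctional_integration_by_parts hlam X
    rw [derivative_X, mul_one, map_sub] at h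
    rw [show gegPoly lam (0 + 1) * gegPoly lam (0 + 1) = C 4 * (X ^ 2) by
      simp only [gegPoly, map_ofNat]; ring, gegFunctional_C_mul, gegConst, hsq]
    rw [← pow_two] at h
    have h1 : gegFunctional hlam 1 = (2 * lam + 2) * gegFunctional hlam (X ^ 2) := by linarith
    have h2 : Real.Gamma (2 * lam + 1) ≠ 0 := (Real.Gamma_pos_of_pos (by linarith)).ne'
    have h3 : 1 + lam ≠ 0 := by linarith
    rw [h1, Nat.cast_zero, zero_add, add_comm 1 (2 * lam), one_add_one_eq_two, Real.Gamma_two]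
    field_simp
    ring
  | succ n ih =>
    have hup : ((n : ℝ) + 2) *
        gegFunctional hlam (gegPoly lam (n + 2) * gegPoly lam (n + 2)) =
        2 * (n + 1 + lam) *
          gegFunctional hlam (X * gegPoly lam (n + 1) * gegPoly lam (n + 2)) := by
      match n with
      | 0 =>
        have h : gegFunctional hlam (C 2 * (gegPoly lam 2 * gegPoly lam 2)) =
            gegFunctional hlam (C (2 * (1 + lam)) * (X * gegPoly lam 1 * gegPoly lam 2) -
              C 2 * gegPoly lam 2) := by
          congr 1
          simp only [gegPoly, C_mul, C_add, map_ofNat, C_1]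
          ring
        rw [map_sub, gegFunctional_C_mul, gegFunctional_C_mul, gegFunctional_C_mul,
          gegFunctional_gegPoly, mul_zero, sub_zero] at h
        simpa using h
      | n + 1 =>
        have h := congrArg (fun p => gegFunctional hlam (p * gegPoly lam (n + 3)))
          (gegPoly_recurrence lam n)
        rw [show ((n : ℝ[X]) + 3) * gegPoly lam (n + 3) * gegPoly lam (n + 3) =
            C ((n : ℝ) + 3) * (gegPoly lam (n + 3) * gegPoly lam (n + 3)) by
            simp only [C_add, C_eq_natCast, map_ofNat]; ring,
          show (2 * ((n : ℝ[X]) + 2 + C lam) * X * gegPoly lam (n + 2) -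
            ((n : ℝ[X]) + 1 + 2 * C lam) * gegPoly lam (n + 1)) * gegPoly lam (n + 3) =
            C (2 * (n + 2 + lam)) * (X * gegPoly lam (n + 2) * gegPoly lam (n + 3)) -
            C (n + 1 + 2 * lam) * (gegPoly lam (n + 1) * gegPoly lam (n + 3)) by
            simp only [C_add, C_mul, C_eq_natCast, map_ofNat, C_1]; ring,
          map_sub, gegFunctional_C_mul, gegFunctional_C_mul, gegFunctional_C_mul,
          gegFunctional_gegPoly_mul_of_ne hlam (by omega : n ≠ n + 2)] at h
        push_cast
        linear_combination h
    have hdown : 2 * (n + 2 + lam) *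
          gegFunctional hlam (X * gegPoly lam (n + 1) * gegPoly lam (n + 2)) =
        (n + 1 + 2 * lam) * gegFunctional hlam (gegPoly lam (n + 1) * gegPoly lam (n + 1)) := by
      have h := congrArg (fun p => gegFunctional hlam (p * gegPoly lam (n + 1)))
        (gegPoly_recurrence lam n)
      rw [show ((n : ℝ[X]) + 3) * gegPoly lam (n + 3) * gegPoly lam (n + 1) =
          C ((n : ℝ) + 3) * (gegPoly lam (n + 3) * gegPoly lam (n + 1)) by
          simp only [C_add, C_eq_natCast, map_ofNat]; ring,
        show (2 * ((n : ℝ[X]) + 2 + C lam) * X * gegPoly lam (n + 2) -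
          ((n : ℝ[X]) + 1 + 2 * C lam) * gegPoly lam (n + 1)) * gegPoly lam (n + 1) =
          C (2 * (n + 2 + lam)) * (X * gegPoly lam (n + 1) * gegPoly lam (n + 2)) -
          C (n + 1 + 2 * lam) * (gegPoly lam (n + 1) * gegPoly lam (n + 1)) by
          simp only [C_add, C_mul, C_eq_natCast, map_ofNat, C_1]; ring,
        map_sub, gegFunctional_C_mul, gegFunctional_C_mul, gegFunctional_C_mul,
        gegFunctional_gegPoly_mul_of_ne hlam (by omega : n + 2 ≠ n)] at h
      linear_combination -h
    have hn : (0 : ℝ) ≤ n := n.cast_nonneg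
    have h2 : (n : ℝ) + 1 + 1 ≠ 0 := by linarith
    have h3 : (n : ℝ) + 1 + 1 + lam ≠ 0 := by linarith
    push_cast
    rw [hsq_add_one hlam (by linarith)]
    rw [ih] at hdown
    field_simp
    linear_combination (n + 2 + lam) * hup + (n + 1 + lam) * hdown

/-- The squared norm of `gegScaled lam l`, divided by `gegConst`. -/
noncomputable def gegScaledNormSq (lam : ℝ) : ℕ → ℝ
  | 0 => Real.Gamma (2 * lam + 1) / 2
  | l + 1 => ((l : ℝ) + 1 + lam) ^ 2 * hsq lam (l + 1)

theorem gegFunctional_gegScaled_sq {lam : ℝ} (hlam : -(1 / 2 : ℝ) < lam) (l : ℕ) :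
    gegFunctional hlam (gegScaled lam l * gegScaled lam l) =
      gegConst hlam * gegScaledNormSq lam l := by
  cases l with
  | zero =>
    have h2 : Real.Gamma (2 * lam + 1) ≠ 0 := (Real.Gamma_pos_of_pos (by linarith)).ne'
    rw [gegScaled, mul_one, gegScaledNormSq, gegConst]
    field_simp
  | succ l =>
    rw [gegScaled_succ, mul_mul_mul_comm, ← C_mul, gegFunctional_C_mul,
      gegFunctional_gegPoly_sq, gegScaledNormSq]
    ring

theorem gegFunctional_gegScaled_mul_derivative {lam : ℝ} (hlam : -(1 / 2 : ℝ) < lam) (l j : ℕ) :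
    gegFunctional hlam (gegScaled lam l * derivative (gegPoly lam j)) =
      if l < j ∧ Odd (l + j) then 2 * (gegConst hlam * gegScaledNormSq lam l) else 0 := by
  rw [derivative_gegPoly, show (2 : ℝ[X]) = C 2 from (map_ofNat C 2).symm, mul_left_comm,
    gegFunctional_C_mul, Finset.mul_sum, map_sum]
  have h (k : ℕ) : gegFunctional hlam (gegScaled lam l * if Odd (k + j) then gegScaled lam k else 0)
      = if l = k then (if Odd (l + j) then gegConst hlam * gegScaledNormSq lam l else 0) else 0 := by
    by_cases hlk : l = k
    · subst hlk
      rw [if_pos rfl]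
      split_ifs
      · exact gegFunctional_gegScaled_sq hlam l
      · rw [mul_zero, map_zero]
    · rw [if_neg hlk]
      split_ifs
      · exact gegFunctional_gegScaled_mul_of_ne hlam hlk
      · rw [mul_zero, map_zero]
  simp only [h, Finset.sum_ite_eq, Finset.mem_range]
  split_ifs <;> simp_all

/-- The squared norm of `derivative (gegPoly lam n)`, divided by `4 * gegConst`. -/
noncomputable def gegDerivNormSq (lam : ℝ) (n : ℕ) : ℝ :=
  ∑ l ∈ Finset.range n, if Odd (l + n) then gegScaledNormSq lam l else 0

theorem gegFunctional_derivative_mul_eq_sum {lam : ℝ} (hlam : -(1 / 2 : ℝ) < lam) (i j : ℕ) :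
    gegFunctional hlam (derivative (gegPoly lam i) * derivative (gegPoly lam j)) =
      2 * ∑ l ∈ Finset.range i, if Odd (l + i) then
        (if l < j ∧ Odd (l + j) then 2 * (gegConst hlam * gegScaledNormSq lam l) else 0) else 0 := by
  rw [derivative_gegPoly lam i, show (2 : ℝ[X]) = C 2 from (map_ofNat C 2).symm, mul_assoc,
    gegFunctional_C_mul, Finset.sum_mul, map_sum]
  congr 1
  refine Finset.sum_congr rfl fun l _ => ?_
  rw [ite_mul, zero_mul, apply_ite (gegFunctional hlam), map_zero,
    gegFunctional_gegScaled_mul_derivative]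

theorem gegFunctional_derivative_mul_of_even {lam : ℝ} (hlam : -(1 / 2 : ℝ) < lam) {i j : ℕ}
    (hij : Even (i + j)) :
    gegFunctional hlam (derivative (gegPoly lam i) * derivative (gegPoly lam j)) =
      4 * gegConst hlam * gegDerivNormSq lam (min i j) := by
  wlog h : i ≤ j generalizing i j
  · rw [mul_comm, min_comm, this (by rwa [add_comm]) (le_of_not_ge h)]
  rw [gegFunctional_derivative_mul_eq_sum, min_eq_left h, gegDerivNormSq, Finset.mul_sum,
    Finset.mul_sum]
  refine Finset.sum_congr rfl fun l hl => ?_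
  have hl' := Finset.mem_range.1 hl
  by_cases hi : Odd (l + i)
  · have hj : Odd (l + j) := by grind
    rw [if_pos hi, if_pos hi, if_pos ⟨hl'.trans_le h, hj⟩]
    ring
  · rw [if_neg hi, if_neg hi, mul_zero, mul_zero]

theorem gegFunctional_derivative_mul_of_odd {lam : ℝ} (hlam : -(1 / 2 : ℝ) < lam) {i j : ℕ}
    (hij : ¬ Even (i + j)) :
    gegFunctional hlam (derivative (gegPoly lam i) * derivative (gegPoly lam j)) = 0 := by
  rw [gegFunctional_derivative_mul_eq_sum, Finset.sum_eq_zero, mul_zero]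
  intro l _
  by_cases hi : Odd (l + i)
  · have hj : ¬ Odd (l + j) := by grind
    simp [hj]
  · rw [if_neg hi]

theorem gegDerivNormSq_add_two (lam : ℝ) (n : ℕ) :
    gegDerivNormSq lam (n + 2) = gegDerivNormSq lam n + gegScaledNormSq lam (n + 1) := by
  have h1 : Odd (n + 1 + (n + 2)) := ⟨n + 1, by ring⟩
  have h2 : ¬ Odd (n + (n + 2)) := by grind
  have h3 (l : ℕ) : Odd (l + (n + 2)) ↔ Odd (l + n) := by grind
  rw [gegDerivNormSq, Finset.sum_range_succ, Finset.sum_range_succ, if_pos h1, if_neg h2]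
  simp only [h3, add_zero, gegDerivNormSq]

theorem gegDerivNormSq_eq {lam : ℝ} (hlam : -(1 / 2 : ℝ) < lam) (n : ℕ) :
    gegDerivNormSq lam n =
      n * (n + lam) * (n + 2 * lam) * hsq lam n / (2 * (2 * lam + 1)) := by
  have h0 : 2 * lam + 1 ≠ 0 := by linarith
  induction n using Nat.twoStepInduction with
  | zero => simp [gegDerivNormSq]
  | one =>
    have h1 : 1 + lam ≠ 0 := by linarith
    simp [gegDerivNormSq, gegScaledNormSq, hsq, one_add_one_eq_two, add_comm 1 (2 * lam)]
    field_simp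
  | more n ih _ =>
    rw [gegDerivNormSq_add_two, ih, gegScaledNormSq]
    have hn : (0 : ℝ) ≤ n := n.cast_nonneg
    have h2 : (n : ℝ) + 1 + 1 ≠ 0 := by linarith
    have h3 : (n : ℝ) + 1 + 1 + lam ≠ 0 := by linarith
    rw [show ((n + 2 : ℕ) : ℝ) = n + 1 + 1 by push_cast; ring,
      hsq_add_one (x := n + 1) hlam (by linarith), div_add' _ _ _ (mul_ne_zero two_ne_zero h0)]
    congr 1
    rcases Nat.eq_zero_or_pos n with rfl | hpos
    · have h4 : (1 : ℝ) + 1 + lam ≠ 0 := by linarith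
      simp
      field_simp
      ring
    · have hn1 : (1 : ℝ) ≤ n := by exact_mod_cast hpos
      have h4 : (n : ℝ) + 1 ≠ 0 := by linarith
      have h5 : (n : ℝ) + 1 + lam ≠ 0 := by linarith
      rw [hsq_add_one hlam hn1]
      field_simp
      ring

/-- The Gram matrix of the derivatives of the normalized polynomials `gegPoly lam (i + 1)`,
for indices of equal parity. -/
noncomputable def gegKernel (lam : ℝ) (i j : ℕ) : ℝ :=
  4 * gegDerivNormSq lam (min i j + 1) / (√(hsq lam (i + 1)) * √(hsq lam (j + 1)))

theorem gegKernel_comm (lam : ℝ) (i j : ℕ) : gegKernel lam i j = gegKernel lam j i := by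
  rw [gegKernel, gegKernel, min_comm, mul_comm (√_)]

theorem gegDerivNormSq_nonneg {lam : ℝ} (hlam : -(1 / 2 : ℝ) < lam) (n : ℕ) :
    0 ≤ gegDerivNormSq lam (n + 1) := by
  have hn : (0 : ℝ) ≤ n := n.cast_nonneg
  have h := hsq_pos (x := n + 1) hlam (by linarith)
  have h1 : 0 ≤ (n : ℝ) + 1 + lam := by linarith
  have h2 : 0 ≤ (n : ℝ) + 1 + 2 * lam := by linarith
  have h3 : 0 ≤ 2 * lam + 1 := by linarith
  rw [gegDerivNormSq_eq hlam]
  push_cast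
  positivity

theorem gegKernel_nonneg {lam : ℝ} (hlam : -(1 / 2 : ℝ) < lam) (i j : ℕ) :
    0 ≤ gegKernel lam i j :=
  div_nonneg (mul_nonneg (by norm_num) (gegDerivNormSq_nonneg hlam _)) (by positivity)

theorem hsq_ratio_le {lam x y : ℝ} (hlam : -(1 / 2 : ℝ) < lam) (hx : 1 ≤ x) (hxy : x ≤ y) :
    (y + lam) * (y + 2 * lam) / ((y + 1) * (y + 1 + lam)) ≤ (x + 1 + 2 * lam) / x := by
  rcases le_total lam 1 with h | h
  · refine (div_le_one_of_le₀ ?_ ?_).trans ((one_le_div (by linarith)).2 (by linarith))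
    · nlinarith [mul_nonneg (sub_nonneg.2 h) (by linarith : 0 ≤ 2 * y + 2 * lam + 1)]
    · exact mul_nonneg (by linarith) (by linarith)
  · have hmono : (y + lam) * (y + 2 * lam) / ((y + 1) * (y + 1 + lam)) ≤
        (x + lam) * (x + 2 * lam) / ((x + 1) * (x + 1 + lam)) := by
      have hx0 : 0 < (x + 1) * (x + 1 + lam) := mul_pos (by linarith) (by linarith)
      have hy0 : 0 < (y + 1) * (y + 1 + lam) := mul_pos (by linarith) (by linarith)
      rw [div_le_div_iff₀ hy0 hx0]
      obtain ⟨d, rfl⟩ : ∃ d, y = x + d := ⟨y - x, by ring⟩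
      obtain ⟨e, rfl⟩ : ∃ e, lam = 1 + e := ⟨lam - 1, by ring⟩
      have hd : 0 ≤ d := by linarith
      have he : 0 ≤ e := by linarith
      have hx' : 0 ≤ x := by linarith
      rw [← sub_nonneg]
      ring_nf
      positivity
    refine hmono.trans ?_
    have hx' : 0 < x := by linarith
    have hl' : 0 < lam := by linarith
    rw [div_le_div_iff₀ (by positivity) hx', ← sub_nonneg]
    ring_nf
    positivity

theorem gegKernel_le_succ {lam : ℝ} (hlam : -(1 / 2 : ℝ) < lam) (i j : ℕ) :
    gegKernel lam i j ≤ gegKernel lam (i + 1) (j + 1) := by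
  wlog hij : i ≤ j generalizing i j
  · rw [gegKernel_comm lam i, gegKernel_comm lam (i + 1)]
    exact this j i (le_of_not_ge hij)
  have hi : (0 : ℝ) ≤ i := i.cast_nonneg
  have hx : (1 : ℝ) ≤ i + 1 := by linarith
  have hxy : (i : ℝ) + 1 ≤ j + 1 := by exact_mod_cast Nat.succ_le_succ hij
  have hy : (1 : ℝ) ≤ j + 1 := hx.trans hxy
  have hD : gegDerivNormSq lam (i + 1 + 1) =
      gegDerivNormSq lam (i + 1) * ((i + 1 + 1 + 2 * lam) / (i + 1)) := by
    rw [gegDerivNormSq_eq hlam, gegDerivNormSq_eq hlam]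
    push_cast
    rw [hsq_add_one hlam hx]
    have h3 : (i : ℝ) + 1 + 1 + lam ≠ 0 := by linarith
    have h4 : 2 * lam + 1 ≠ 0 := by linarith
    field_simp
  rw [gegKernel, gegKernel, min_eq_left hij, min_eq_left (by omega), hD]
  push_cast
  rw [hsq_add_one hlam hx, hsq_add_one hlam hy]
  have hrx := hsq_ratio_le hlam hx le_rfl
  have hry := hsq_ratio_le hlam hx hxy
  have hrx0 : 0 < ((i : ℝ) + 1 + lam) * (i + 1 + 2 * lam) / ((i + 1 + 1) * (i + 1 + 1 + lam)) :=
    div_pos (mul_pos (by linarith) (by linarith)) (mul_pos (by linarith) (by linarith))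
  have hry0 : 0 < ((j : ℝ) + 1 + lam) * (j + 1 + 2 * lam) / ((j + 1 + 1) * (j + 1 + 1 + lam)) :=
    div_pos (mul_pos (by linarith) (by linarith)) (mul_pos (by linarith) (by linarith))
  have hhx := hsq_pos hlam hx
  have hhy := hsq_pos hlam hy
  have hD0 := gegDerivNormSq_nonneg hlam i
  generalize ((i : ℝ) + 1 + lam) * (i + 1 + 2 * lam) / ((i + 1 + 1) * (i + 1 + 1 + lam)) = r at *
  generalize ((j : ℝ) + 1 + lam) * (j + 1 + 2 * lam) / ((j + 1 + 1) * (j + 1 + 1 + lam)) = t at *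
  generalize ((i : ℝ) + 1 + 1 + 2 * lam) / (i + 1) = ρ at *
  have hsqrt : √r * √t ≤ ρ := by
    rw [← Real.sqrt_mul hrx0.le]
    exact Real.sqrt_le_iff.2 ⟨by linarith, by nlinarith⟩
  rw [Real.sqrt_mul hhx.le, Real.sqrt_mul hhy.le, div_le_div_iff₀ (by positivity) (by positivity)]
  have hnn : 0 ≤ 4 * gegDerivNormSq lam (i + 1) *
    (√(hsq lam (i + 1)) * √(hsq lam (j + 1))) := by positivity
  nlinarith [mul_le_mul_of_nonneg_left hsqrt hnn]

theorem sum_gegAlpha_sq {lam : ℝ} (hlam : -(1 / 2 : ℝ) < lam) (q : ℕ) :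
    ∑ i ∈ Finset.Icc 1 q, gegAlpha lam i ^ 2 = gegDerivNormSq lam (2 * q) := by
  induction q with
  | zero => simp [gegDerivNormSq]
  | succ q ih =>
    have hq : (0 : ℝ) ≤ q := q.cast_nonneg
    rw [Finset.sum_Icc_succ_top (by omega), ih, mul_add, mul_one, gegDerivNormSq_add_two,
      gegScaledNormSq, gegAlpha, mul_pow, Real.sq_sqrt]
    · push_cast
      ring_nf
    · exact (hsq_pos hlam (by push_cast; linarith)).le

theorem sum_gegAlphaTildeSq (lam : ℝ) (q : ℕ) :
    ∑ i ∈ Finset.Icc 1 (q + 1), gegAlphaTildeSq lam i = gegDerivNormSq lam (2 * q + 1) := by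
  induction q with
  | zero => simp [gegDerivNormSq, gegAlphaTildeSq, gegScaledNormSq]
  | succ q ih =>
    rw [Finset.sum_Icc_succ_top (by omega), ih, show 2 * (q + 1) + 1 = 2 * q + 1 + 2 by ring,
      gegDerivNormSq_add_two, gegScaledNormSq, gegAlphaTildeSq, if_neg (by omega)]
    push_cast
    ring_nf

theorem Bmat_apply_of_even {lam : ℝ} (hlam : -(1 / 2 : ℝ) < lam) {n : ℕ} (hn : n % 2 = 0)
    (k j : Fin ((n + 1) / 2)) : Bmat lam n k j = gegKernel lam (2 * k + 1) (2 * j + 1) := by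
  rw [Bmat, if_pos hn, Matrix.smul_apply, Amat, sum_gegAlpha_sq hlam, gegKernel, gegBeta, gegBeta,
    show min (2 * (k : ℕ) + 1) (2 * j + 1) + 1 = 2 * min ((k : ℕ) + 1) (j + 1) by omega,
    smul_eq_mul]
  push_cast
  ring_nf

theorem Bmat_apply_of_odd {lam : ℝ} {n : ℕ} (hn : n % 2 = 1)
    (k j : Fin ((n + 1) / 2)) : Bmat lam n k j = gegKernel lam (2 * k) (2 * j) := by
  rw [Bmat, if_neg (by omega), Matrix.smul_apply, AmatTilde, gegKernel,
    gegBetaTilde, gegBetaTilde,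
    show min ((k : ℕ) + 1) (j + 1) = min (k : ℕ) j + 1 by omega, sum_gegAlphaTildeSq,
    show min (2 * (k : ℕ)) (2 * j) + 1 = 2 * min (k : ℕ) j + 1 by omega, smul_eq_mul]
  push_cast
  ring_nf

/-- A constant plus a combination of the polynomials `gegPoly lam (i + 1)`, each divided by
`√(hsq lam (i + 1))`. -/
noncomputable def gegComb (lam : ℝ) (n : ℕ) (a : ℝ) (u : ℕ → ℝ) : ℝ[X] :=
  C a + ∑ i ∈ Finset.range n, C (u i / √(hsq lam (i + 1))) * gegPoly lam (i + 1)

theorem sqrt_hsq_succ_pos {lam : ℝ} (hlam : -(1 / 2 : ℝ) < lam) (i : ℕ) :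
    0 < √(hsq lam (i + 1)) :=
  Real.sqrt_pos.2 (hsq_pos hlam (by linarith [(i.cast_nonneg : (0 : ℝ) ≤ i)]))

theorem exists_eq_gegComb {lam : ℝ} (hlam : -(1 / 2 : ℝ) < lam) {n : ℕ} {p : ℝ[X]}
    (hp : p.natDegree ≤ n) : ∃ (a : ℝ) (u : ℕ → ℝ), p = gegComb lam n a u := by
  obtain ⟨a, b, h⟩ := exists_eq_sum_gegPoly hlam n p hp
  refine ⟨a, fun i => b i * √(hsq lam (i + 1)), h.trans ?_⟩
  rw [gegComb]
  congr 1
  refine Finset.sum_congr rfl fun i _ => ?_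
  rw [mul_div_cancel_right₀ _ (sqrt_hsq_succ_pos hlam i).ne']

theorem natDegree_gegComb_le (lam : ℝ) (n : ℕ) (a : ℝ) (u : ℕ → ℝ) :
    (gegComb lam n a u).natDegree ≤ n := by
  refine (natDegree_add_le _ _).trans (max_le (by simp) (natDegree_sum_le_of_forall_le _ _ ?_))
  intro i hi
  have h := natDegree_gegPoly_le lam (i + 1)
  have hi' := Finset.mem_range.1 hi
  exact (natDegree_C_mul_le _ _).trans (by omega)

theorem gegFunctional_gegComb_sq {lam : ℝ} (hlam : -(1 / 2 : ℝ) < lam) (n : ℕ) (a : ℝ)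
    (u : ℕ → ℝ) :
    gegFunctional hlam (gegComb lam n a u * gegComb lam n a u) =
      a ^ 2 * gegFunctional hlam 1 + gegConst hlam * ∑ i ∈ Finset.range n, u i ^ 2 := by
  have hlin : gegFunctional hlam
      (∑ i ∈ Finset.range n, C (u i / √(hsq lam (i + 1))) * gegPoly lam (i + 1)) = 0 := by
    rw [map_sum]
    exact Finset.sum_eq_zero fun i _ => by rw [gegFunctional_C_mul, gegFunctional_gegPoly, mul_zero]
  have hquad : gegFunctional hlam
      ((∑ i ∈ Finset.range n, C (u i / √(hsq lam (i + 1))) * gegPoly lam (i + 1)) *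
        ∑ i ∈ Finset.range n, C (u i / √(hsq lam (i + 1))) * gegPoly lam (i + 1)) =
      gegConst hlam * ∑ i ∈ Finset.range n, u i ^ 2 := by
    rw [Finset.sum_mul_sum, map_sum, Finset.mul_sum]
    refine Finset.sum_congr rfl fun i hi => ?_
    rw [map_sum, Finset.sum_eq_single i]
    · have h := Real.mul_self_sqrt (hsq_pos (x := i + 1) hlam
        (by linarith [(i.cast_nonneg : (0 : ℝ) ≤ i)])).le
      have h0 := (sqrt_hsq_succ_pos hlam i).ne'
      rw [mul_mul_mul_comm, ← C_mul, gegFunctional_C_mul, gegFunctional_gegPoly_sq]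
      nth_rewrite 3 [← h]
      field_simp
    · intro j _ hj
      rw [mul_mul_mul_comm, ← C_mul, gegFunctional_C_mul,
        gegFunctional_gegPoly_mul_of_ne hlam hj.symm, mul_zero]
    · exact fun h => absurd hi h
  rw [gegComb]
  generalize ∑ i ∈ Finset.range n, C (u i / √(hsq lam (i + 1))) * gegPoly lam (i + 1) = q at *
  rw [show (C a + q) * (C a + q) = C (a ^ 2) * 1 + C (2 * a) * q + q * q by
    rw [C_mul, C_pow, map_ofNat]; ring, map_add, map_add, gegFunctional_C_mul,
    gegFunctional_C_mul, hlin, hquad, mul_zero, add_zero]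

theorem gegFunctional_derivative_gegComb_sq {lam : ℝ} (hlam : -(1 / 2 : ℝ) < lam) (n : ℕ) (a : ℝ)
    (u : ℕ → ℝ) :
    gegFunctional hlam (derivative (gegComb lam n a u) * derivative (gegComb lam n a u)) =
      gegConst hlam * ∑ i ∈ Finset.range n, ∑ j ∈ Finset.range n,
        if Even (i + j) then gegKernel lam i j * u i * u j else 0 := by
  rw [gegComb, derivative_add, derivative_C, zero_add, derivative_sum, Finset.sum_mul_sum, map_sum,
    Finset.mul_sum]
  refine Finset.sum_congr rfl fun i _ => ?_
  rw [map_sum, Finset.mul_sum]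
  refine Finset.sum_congr rfl fun j _ => ?_
  rw [derivative_C_mul, derivative_C_mul, mul_mul_mul_comm, ← C_mul, gegFunctional_C_mul]
  split_ifs with h
  · rw [gegFunctional_derivative_mul_of_even hlam (by grind), gegKernel,
      show min (i + 1) (j + 1) = min i j + 1 by omega]
    have hi := (sqrt_hsq_succ_pos hlam i).ne'
    have hj := (sqrt_hsq_succ_pos hlam j).ne'
    field_simp
  · rw [gegFunctional_derivative_mul_of_odd hlam (by grind), mul_zero, mul_zero]

theorem gegFunctional_mul_self_nonneg {lam : ℝ} (hlam : -(1 / 2 : ℝ) < lam) (p : ℝ[X]) :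
    0 ≤ gegFunctional hlam (p * p) := by
  obtain ⟨a, u, hu⟩ := exists_eq_gegComb hlam (le_refl p.natDegree)
  have h1 := gegFunctional_one_pos hlam
  have h2 := gegConst_pos hlam
  rw [hu, gegFunctional_gegComb_sq]
  positivity

theorem gegFunctional_mul_self_pos {lam : ℝ} (hlam : -(1 / 2 : ℝ) < lam) {p : ℝ[X]}
    (hp : p ≠ 0) : 0 < gegFunctional hlam (p * p) := by
  refine (gegFunctional_mul_self_nonneg hlam p).lt_of_ne' fun h => hp ?_
  obtain ⟨a, u, hu⟩ := exists_eq_gegComb hlam (le_refl p.natDegree)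
  have h1 := gegFunctional_one_pos hlam
  have h2 := gegConst_pos hlam
  have hsum : 0 ≤ ∑ i ∈ Finset.range p.natDegree, u i ^ 2 :=
    Finset.sum_nonneg fun i _ => sq_nonneg (u i)
  rw [hu, gegFunctional_gegComb_sq, add_eq_zero_iff_of_nonneg (by positivity) (by positivity),
    mul_eq_zero, mul_eq_zero, or_iff_left h1.ne', or_iff_right h2.ne',
    Finset.sum_eq_zero_iff_of_nonneg fun i _ => sq_nonneg (u i)] at h
  rw [hu, gegComb, pow_eq_zero_iff two_ne_zero |>.1 h.1, C_0, zero_add]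
  refine Finset.sum_eq_zero fun i hi => ?_
  rw [pow_eq_zero_iff two_ne_zero |>.1 (h.2 i hi), zero_div, C_0, zero_mul]

theorem exists_max_eigenpair {m : ℕ} (hm : 0 < m) (B : Matrix (Fin m) (Fin m) ℝ)
    (hB : B.IsHermitian) :
    ∃ (mu : ℝ) (v : Fin m → ℝ), v ≠ 0 ∧ B.mulVec v = mu • v ∧
      ∀ u : Fin m → ℝ, u ⬝ᵥ B.mulVec u ≤ mu * (u ⬝ᵥ u) := by
  have : Nonempty (Fin m) := ⟨⟨0, hm⟩⟩
  have hsymm := Matrix.isSymmetric_toEuclideanLin_iff.2 hB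
  obtain ⟨v, hv⟩ := hsymm.hasEigenvalue_iSup_of_finiteDimensional.exists_hasEigenvector
  set T := Matrix.toEuclideanLin B
  refine ⟨⨆ x : {x : EuclideanSpace ℝ (Fin m) // x ≠ 0},
    RCLike.re (inner ℝ (T x) x.1) / ‖x.1‖ ^ 2, v.ofLp, ?_, ?_, fun u => ?_⟩
  · simpa using hv.2
  · have h := congrArg WithLp.ofLp hv.apply_eq_smul
    rw [Matrix.ofLp_toLpLin, Matrix.toLin'_apply] at h
    simpa using h
  · by_cases hu : u = 0
    · simp [hu]
    have hbdd : BddAbove (Set.range fun x : {x : EuclideanSpace ℝ (Fin m) // x ≠ 0} =>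
        RCLike.re (inner ℝ (T x) x.1) / ‖x.1‖ ^ 2) := by
      refine ⟨‖T.toContinuousLinearMap‖, ?_⟩
      rintro _ ⟨⟨x, hx⟩, rfl⟩
      have hx' : 0 < ‖x‖ := norm_pos_iff.2 hx
      have h1 := real_inner_le_norm (T x) x
      have h2 : ‖T x‖ ≤ _ := T.toContinuousLinearMap.le_opNorm x
      simp only [RCLike.re_to_real]
      rw [div_le_iff₀ (by positivity)]
      nlinarith
    have h := le_ciSup hbdd ⟨WithLp.toLp 2 u, by simpa using hu⟩
    have hpos : 0 < ‖WithLp.toLp 2 u‖ := norm_pos_iff.2 (by simpa using hu)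
    have hnorm : ‖WithLp.toLp 2 u‖ ^ 2 = u ⬝ᵥ u := by
      rw [← real_inner_self_eq_norm_sq, EuclideanSpace.inner_eq_star_dotProduct]
      simp
    rw [div_le_iff₀ (by positivity), hnorm] at h
    simpa [T, EuclideanSpace.inner_eq_star_dotProduct, Matrix.toLpLin_toLp] using h

theorem sum_range_eq_sum_parity {M n e : ℕ} (h : (e = 1 ∧ n = 2 * M) ∨ (e = 0 ∧ n + 1 = 2 * M))
    (g : ℕ → ℝ) :
    ∑ i ∈ Finset.range n, g i = ∑ k ∈ Finset.range M, g (2 * k + e) +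
      ∑ k ∈ Finset.range (n - M), g (2 * k + (1 - e)) := by
  have heven : ∀ N, ∑ i ∈ Finset.range (2 * N), g i =
      ∑ k ∈ Finset.range N, g (2 * k) + ∑ k ∈ Finset.range N, g (2 * k + 1) := by
    intro N
    induction N with
    | zero => simp
    | succ N ih =>
      rw [show 2 * (N + 1) = 2 * N + 1 + 1 by ring, Finset.sum_range_succ, Finset.sum_range_succ,
        ih, Finset.sum_range_succ, Finset.sum_range_succ]
      ring
  rcases h with ⟨rfl, rfl⟩ | ⟨rfl, h⟩
  · rw [heven, show 2 * M - M = M by omega, add_comm]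
    simp
  · obtain ⟨N, rfl⟩ : ∃ N, M = N + 1 := ⟨M - 1, by omega⟩
    obtain rfl : n = 2 * N + 1 := by omega
    rw [Finset.sum_range_succ, heven, show 2 * N + 1 - (N + 1) = N by omega,
      Finset.sum_range_succ]
    simp only [add_zero, Nat.sub_zero]
    ring

theorem sum_even_eq_sum_parity {M n e : ℕ} (h : (e = 1 ∧ n = 2 * M) ∨ (e = 0 ∧ n + 1 = 2 * M))
    (f : ℕ → ℕ → ℝ) :
    (∑ i ∈ Finset.range n, ∑ j ∈ Finset.range n, if Even (i + j) then f i j else 0) =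
      ∑ k ∈ Finset.range M, ∑ l ∈ Finset.range M, f (2 * k + e) (2 * l + e) +
      ∑ k ∈ Finset.range (n - M), ∑ l ∈ Finset.range (n - M),
        f (2 * k + (1 - e)) (2 * l + (1 - e)) := by
  have he : e ≤ 1 := by omega
  rw [sum_range_eq_sum_parity h]
  congr 1 <;> refine Finset.sum_congr rfl fun k _ => ?_ <;> rw [sum_range_eq_sum_parity h]
  · rw [Finset.sum_congr rfl fun l _ => if_pos (by grind),
      Finset.sum_eq_zero (s := Finset.range (n - M)) fun l _ => if_neg (by grind), add_zero]
  · rw [Finset.sum_eq_zero (s := Finset.range M) fun l _ => if_neg (by grind),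
      Finset.sum_congr rfl fun l _ => if_pos (by grind), zero_add]

/-- An upper bound for the quadratic form on the indices of the parity of `n - 1` is inherited by
the other parity class. -/
theorem gegKernel_quadratic_le_of_parity {lam : ℝ} (hlam : -(1 / 2 : ℝ) < lam) {M n e : ℕ}
    (h : (e = 1 ∧ n = 2 * M) ∨ (e = 0 ∧ n + 1 = 2 * M)) {mu : ℝ}
    (hmu : ∀ w : ℕ → ℝ, ∑ k ∈ Finset.range M, ∑ l ∈ Finset.range M,
      gegKernel lam (2 * k + e) (2 * l + e) * w k * w l ≤ mu * ∑ k ∈ Finset.range M, w k ^ 2)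
    (u : ℕ → ℝ) :
    ∑ k ∈ Finset.range (n - M), ∑ l ∈ Finset.range (n - M),
      gegKernel lam (2 * k + (1 - e)) (2 * l + (1 - e)) * u k * u l ≤
        mu * ∑ k ∈ Finset.range (n - M), u k ^ 2 := by
  have hterm : ∀ i j k l, gegKernel lam i j * u k * u l ≤
      gegKernel lam (i + 1) (j + 1) * |u k| * |u l| := by
    intro i j k l
    have h1 := gegKernel_le_succ hlam i j
    have h2 := gegKernel_nonneg hlam i j
    rw [mul_assoc, mul_assoc, ← abs_mul]
    exact (mul_le_mul_of_nonneg_left (le_abs_self _) h2).trans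
      (mul_le_mul_of_nonneg_right h1 (abs_nonneg _))
  rcases h with ⟨rfl, rfl⟩ | ⟨rfl, h⟩
  · have hM : 2 * M - M = M := by omega
    rw [hM]
    refine (Finset.sum_le_sum fun k _ => Finset.sum_le_sum fun l _ => hterm _ _ k l).trans ?_
    simpa using hmu fun k => |u k|
  · obtain ⟨N, rfl⟩ : ∃ N, M = N + 1 := ⟨M - 1, by omega⟩
    have hN : n - (N + 1) = N := by omega
    rw [hN]
    refine (Finset.sum_le_sum fun k _ => Finset.sum_le_sum fun l _ => hterm _ _ k l).trans ?_
    have := hmu fun k => if k = 0 then 0 else |u (k - 1)|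
    simpa [Finset.sum_range_succ', mul_add, add_assoc] using this

theorem markovConst_sq_eq_sSup_eigenvalues {lam : ℝ} (hlam : -(1 / 2 : ℝ) < lam) {M n e : ℕ}
    (hM : 0 < M) (h : (e = 1 ∧ n = 2 * M) ∨ (e = 0 ∧ n + 1 = 2 * M))
    (B : Matrix (Fin M) (Fin M) ℝ)
    (hB : ∀ k l, B k l = gegKernel lam (2 * k + e) (2 * l + e)) :
    markovConst lam n ^ 2 = sSup {mu : ℝ | ∃ v : Fin M → ℝ, v ≠ 0 ∧ B.mulVec v = mu • v} := by
  obtain ⟨mu, v, hv0, hv, hmax⟩ := exists_max_eigenpair hM B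
    (Matrix.IsHermitian.ext fun k l => by simp [hB, gegKernel_comm lam (2 * (l : ℕ) + e)])
  have hquad : ∀ w : ℕ → ℝ, ∑ k ∈ Finset.range M, ∑ l ∈ Finset.range M,
      gegKernel lam (2 * k + e) (2 * l + e) * w k * w l =
        (fun k : Fin M => w k) ⬝ᵥ B.mulVec fun k => w k := by
    intro w
    simp only [dotProduct, Matrix.mulVec, hB, Finset.sum_range, Finset.mul_sum]
    exact Finset.sum_congr rfl fun k _ => Finset.sum_congr rfl fun l _ => by ring
  have hnorm : ∀ w : ℕ → ℝ, ∑ k ∈ Finset.range M, w k ^ 2 =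
      (fun k : Fin M => w k) ⬝ᵥ fun k => w k := by
    intro w
    simp only [dotProduct, Finset.sum_range, sq]
  have hmain : ∀ w : ℕ → ℝ, ∑ k ∈ Finset.range M, ∑ l ∈ Finset.range M,
      gegKernel lam (2 * k + e) (2 * l + e) * w k * w l ≤
        mu * ∑ k ∈ Finset.range M, w k ^ 2 := by
    intro w
    rw [hquad, hnorm]
    exact hmax _
  have hc := gegConst_pos hlam
  -- the extremal polynomial
  set u : ℕ → ℝ := fun i => if hi : i / 2 < M ∧ i % 2 = e then v ⟨i / 2, hi.1⟩ else 0 with hu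
  have he : e ≤ 1 := by omega
  have hu1 : ∀ k : Fin M, u (2 * k + e) = v k := by
    intro k
    have h1 : (2 * (k : ℕ) + e) / 2 = k := by omega
    have h2 : (2 * (k : ℕ) + e) % 2 = e := by omega
    simp [hu, h1, h2]
  have hu2 : ∀ k, u (2 * k + (1 - e)) = 0 := fun k => dif_neg (by omega)
  have hvv : 0 < v ⬝ᵥ v := Matrix.dotProduct_star_self_pos_iff.2 hv0
  have hpp : gegFunctional hlam (gegComb lam n 0 u * gegComb lam n 0 u) =
      gegConst hlam * (v ⬝ᵥ v) := by
    rw [gegFunctional_gegComb_sq, sum_range_eq_sum_parity h, hnorm fun k => u (2 * k + e)]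
    simp [hu1, hu2]
  have hdd : gegFunctional hlam (derivative (gegComb lam n 0 u) * derivative (gegComb lam n 0 u)) =
      mu * (gegConst hlam * (v ⬝ᵥ v)) := by
    rw [gegFunctional_derivative_gegComb_sq,
      sum_even_eq_sum_parity h fun i j => gegKernel lam i j * u i * u j,
      hquad fun k => u (2 * k + e)]
    simp only [hu1, hu2, hv, mul_zero, Finset.sum_const_zero, add_zero, dotProduct_smul,
      smul_eq_mul]
    ring
  have hmu0 : 0 ≤ mu := by
    have h0 := gegFunctional_mul_self_nonneg hlam (derivative (gegComb lam n 0 u))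
    rw [hdd] at h0
    exact nonneg_of_mul_nonneg_left h0 (by positivity)
  have hle : ∀ p : ℝ[X], p.natDegree ≤ n →
      gegFunctional hlam (derivative p * derivative p) ≤ mu * gegFunctional hlam (p * p) := by
    intro p hp
    obtain ⟨a, w, rfl⟩ := exists_eq_gegComb hlam hp
    rw [gegFunctional_derivative_gegComb_sq, gegFunctional_gegComb_sq,
      sum_even_eq_sum_parity h fun i j => gegKernel lam i j * w i * w j,
      sum_range_eq_sum_parity h]
    have h1 := hmain fun k => w (2 * k + e)
    have h2 := gegKernel_quadratic_le_of_parity hlam h hmain fun k => w (2 * k + (1 - e))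
    have h3 := mul_nonneg hmu0 (mul_nonneg (sq_nonneg a) (gegFunctional_one_pos hlam).le)
    have h4 := mul_le_mul_of_nonneg_left (add_le_add h1 h2) hc.le
    linarith
  have hmarkov : markovConst lam n = √mu := by
    refine IsGreatest.csSup_eq ⟨⟨gegComb lam n 0 u, ?_, natDegree_gegComb_le _ _ _ _, ?_⟩, ?_⟩
    · intro h0
      rw [h0, mul_zero, map_zero] at hpp
      exact (mul_pos hc hvv).ne hpp
    · rw [gegNorm_eval hlam, gegNorm_eval hlam, hpp, hdd, Real.sqrt_mul hmu0,
        mul_div_cancel_right₀ _ (Real.sqrt_pos.2 (mul_pos hc hvv)).ne']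
    · rintro _ ⟨p, hp0, hp, rfl⟩
      rw [gegNorm_eval hlam, gegNorm_eval hlam,
        div_le_iff₀ (Real.sqrt_pos.2 (gegFunctional_mul_self_pos hlam hp0)), ← Real.sqrt_mul hmu0]
      exact Real.sqrt_le_sqrt (hle p hp)
  rw [hmarkov, Real.sq_sqrt hmu0]
  symm
  refine IsGreatest.csSup_eq ⟨⟨v, hv0, hv⟩, ?_⟩
  rintro nu ⟨w, hw0, hw⟩
  have hww : 0 < w ⬝ᵥ w := Matrix.dotProduct_star_self_pos_iff.2 hw0
  have := hmax w
  rw [hw, dotProduct_smul, smul_eq_mul] at this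
  exact le_of_mul_le_mul_right this hww

theorem markov_constant_eq_max_eigenvalue (lam : ℝ) (hlam : -(1/2 : ℝ) < lam)
    (n : ℕ) (hn : 1 ≤ n) :
    (markovConst lam n)^2 =
      sSup {mu : ℝ | ∃ v : Fin ((n+1)/2) → ℝ, v ≠ 0 ∧ (Bmat lam n).mulVec v = mu • v} := by
  rcases Nat.mod_two_eq_zero_or_one n with h | h
  · exact markovConst_sq_eq_sSup_eigenvalues (e := 1) hlam (by omega) (.inl ⟨rfl, by omega⟩) _
      (Bmat_apply_of_even hlam h)
  · exact markovConst_sq_eq_sSup_eigenvalues (e := 0) hlam (by omega) (.inr ⟨rfl, by omega⟩) _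
      (Bmat_apply_of_odd h)
end

section
/- Let λ > -1/2 and define F_1(x) = x^{2λ}(x + λ/2)²(x + λ)² and F_2(x) = x²(x + λ/2)²(x + λ)^{2λ} for x > 0 (real powers). Then F_1 and F_2 are convex on [1/2, ∞) and monotonically increasing on [1, ∞). -/
lemma hasDerivAt_add_rpow_mul {a r x q' : ℝ} {q : ℝ → ℝ} (hx : 0 < x + a)
    (hq : HasDerivAt q q' x) :
    HasDerivAt (fun y : ℝ => (y + a) ^ r * q y)
      ((x + a) ^ (r - 1) * (r * q x + (x + a) * q')) x := by
  have h := (((hasDerivAt_id x).add_const a).rpow_const (p := r) (Or.inl hx.ne')).mul hq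
  refine h.congr_deriv ?_
  have e : (x + a) ^ r = (x + a) ^ (r - 1) * (x + a) := by
    rw [← Real.rpow_add_one hx.ne', sub_add_cancel]
  simp only [id_eq, e]
  ring

lemma convexOn_add_rpow_mul {a r s : ℝ} {q q' q'' : ℝ → ℝ} (hs : 0 < s + a)
    (hq : ∀ x, HasDerivAt q (q' x) x) (hq' : ∀ x, HasDerivAt q' (q'' x) x)
    (hpos : ∀ x, s < x →
      0 ≤ r * (r - 1) * q x + 2 * r * (x + a) * q' x + (x + a) ^ 2 * q'' x) :
    ConvexOn ℝ (Set.Ici s) (fun x : ℝ => (x + a) ^ r * q x) := by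
  refine convexOn_of_hasDerivWithinAt2_nonneg (convex_Ici s)
    (f' := fun x => (x + a) ^ (r - 1) * (r * q x + (x + a) * q' x))
    (f'' := fun x => (x + a) ^ (r - 1 - 1) *
      (r * (r - 1) * q x + 2 * r * (x + a) * q' x + (x + a) ^ 2 * q'' x)) ?_ ?_ ?_ ?_
  · intro x hx
    have hx' : s ≤ x := hx
    exact (hasDerivAt_add_rpow_mul (by linarith) (hq x)).continuousAt.continuousWithinAt
  · intro x hx
    rw [interior_Ici, Set.mem_Ioi] at hx
    exact (hasDerivAt_add_rpow_mul (by linarith) (hq x)).hasDerivWithinAt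
  · intro x hx
    rw [interior_Ici, Set.mem_Ioi] at hx
    have hd := ((hq x).const_mul r).add (((hasDerivAt_id x).add_const a).mul (hq' x))
    refine ((hasDerivAt_add_rpow_mul (r := r - 1) (by linarith) hd).congr_deriv
      ?_).hasDerivWithinAt
    simp only [id_eq, Pi.add_apply, Pi.mul_apply]
    ring
  · intro x hx
    rw [interior_Ici, Set.mem_Ioi] at hx
    exact mul_nonneg (Real.rpow_nonneg (by linarith) _) (hpos x hx)

lemma monotoneOn_add_rpow_mul {a r s : ℝ} {q q' : ℝ → ℝ} (hs : 0 < s + a)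
    (hq : ∀ x, HasDerivAt q (q' x) x)
    (hpos : ∀ x, s < x → 0 ≤ r * q x + (x + a) * q' x) :
    MonotoneOn (fun x : ℝ => (x + a) ^ r * q x) (Set.Ici s) := by
  refine monotoneOn_of_hasDerivWithinAt_nonneg (convex_Ici s)
    (f' := fun x => (x + a) ^ (r - 1) * (r * q x + (x + a) * q' x)) ?_ ?_ ?_
  · intro x hx
    have hx' : s ≤ x := hx
    exact (hasDerivAt_add_rpow_mul (by linarith) (hq x)).continuousAt.continuousWithinAt
  · intro x hx
    rw [interior_Ici, Set.mem_Ioi] at hx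
    exact (hasDerivAt_add_rpow_mul (by linarith) (hq x)).hasDerivWithinAt
  · intro x hx
    rw [interior_Ici, Set.mem_Ioi] at hx
    exact mul_nonneg (Real.rpow_nonneg (by linarith) _) (hpos x hx)

lemma hasDerivAt_sq_mul_sq (a b x : ℝ) :
    HasDerivAt (fun y : ℝ => (y + a) ^ 2 * (y + b) ^ 2)
      (2 * ((x + a) * (x + b)) * ((x + a) + (x + b))) x := by
  have h := (((hasDerivAt_id x).add_const a).pow 2).mul (((hasDerivAt_id x).add_const b).pow 2)
  refine h.congr_deriv ?_
  simp
  ring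

lemma hasDerivAt_deriv_sq_mul_sq (a b x : ℝ) :
    HasDerivAt (fun y : ℝ => 2 * ((y + a) * (y + b)) * ((y + a) + (y + b)))
      (2 * ((x + a) + (x + b)) ^ 2 + 4 * ((x + a) * (x + b))) x := by
  have ha := (hasDerivAt_id x).add_const a
  have hb := (hasDerivAt_id x).add_const b
  refine (((ha.mul hb).const_mul 2).mul (ha.add hb)).congr_deriv ?_
  simp
  ring

/-- Here `w` is the base of the real power, `A` and `S` the product and the sum of the other two
linear factors. -/
lemma second_derivative_factor_nonneg {L w A S : ℝ} (hL : -(1 / 2) < L) (hw : 0 < w) (hA : 0 < A)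
    (hS : 0 < S) (h : 0 ≤ L → L < 1 / 2 → A ≤ 4 * w * S) :
    0 ≤ 2 * L * (2 * L - 1) * A ^ 2 + 2 * (2 * L) * w * (2 * A * S) +
      w ^ 2 * (2 * S ^ 2 + 4 * A) := by
  have hwA : 0 < w ^ 2 * A := by positivity
  rcases lt_or_ge L 0 with h0 | h0
  · have h1 : 0 ≤ (-L) * (1 + 2 * L) * A ^ 2 :=
      mul_nonneg (mul_nonneg (by linarith) (by linarith)) (sq_nonneg A)
    nlinarith [sq_nonneg (w * S + 2 * L * A)]
  · rcases lt_or_ge L (1 / 2) with h2 | h2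
    · have h3 : 0 ≤ L * A * (4 * w * S - A) :=
        mul_nonneg (mul_nonneg h0 hA.le) (sub_nonneg.2 (h h0 h2))
      nlinarith [sq_nonneg (L * A), sq_nonneg (w * S)]
    · have h3 : 0 ≤ 2 * L - 1 := by linarith
      positivity

theorem F1_F2_convex_increasing (lam : ℝ) (hlam : -(1/2 : ℝ) < lam) :
    ConvexOn ℝ (Set.Ici (1/2 : ℝ))
      (fun x : ℝ => x ^ (2*lam) * (x + lam/2)^2 * (x + lam)^2) ∧
    MonotoneOn (fun x : ℝ => x ^ (2*lam) * (x + lam/2)^2 * (x + lam)^2) (Set.Ici (1 : ℝ)) ∧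
    ConvexOn ℝ (Set.Ici (1/2 : ℝ))
      (fun x : ℝ => x^2 * (x + lam/2)^2 * (x + lam) ^ (2*lam)) ∧
    MonotoneOn (fun x : ℝ => x^2 * (x + lam/2)^2 * (x + lam) ^ (2*lam)) (Set.Ici (1 : ℝ)) := by
  have e1 : (fun x : ℝ => x ^ (2*lam) * (x + lam/2)^2 * (x + lam)^2) =
      fun x : ℝ => (x + 0) ^ (2*lam) * ((x + lam/2)^2 * (x + lam)^2) := by
    funext x; rw [add_zero, mul_assoc]
  have e2 : (fun x : ℝ => x^2 * (x + lam/2)^2 * (x + lam) ^ (2*lam)) =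
      fun x : ℝ => (x + lam) ^ (2*lam) * ((x + 0)^2 * (x + lam/2)^2) := by
    funext x; rw [add_zero, mul_comm]
  rw [e1, e2]
  refine ⟨convexOn_add_rpow_mul (by norm_num) (hasDerivAt_sq_mul_sq _ _)
      (hasDerivAt_deriv_sq_mul_sq _ _) fun x hx => ?_,
    monotoneOn_add_rpow_mul (by norm_num) (hasDerivAt_sq_mul_sq _ _) fun x hx => ?_,
    convexOn_add_rpow_mul (by linarith) (hasDerivAt_sq_mul_sq _ _)
      (hasDerivAt_deriv_sq_mul_sq _ _) fun x hx => ?_,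
    monotoneOn_add_rpow_mul (by linarith) (hasDerivAt_sq_mul_sq _ _) fun x hx => ?_⟩
  all_goals
    have hx0 : 0 < x := by linarith
    have hb : 0 < x + lam / 2 := by linarith
    have hc : 0 < x + lam := by linarith
    rw [add_zero]
  · rw [← mul_pow]
    refine second_derivative_factor_nonneg hlam hx0 (mul_pos hb hc) (add_pos hb hc) fun h0 h1 => ?_
    nlinarith [mul_pos hx0 hb, mul_pos hx0 hc, mul_nonneg hb.le (by linarith : 0 ≤ x - lam)]
  · have h : 0 ≤ lam * ((x + lam / 2) * (x + lam)) + x * ((x + lam / 2) + (x + lam)) := by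
      rcases lt_or_ge lam 0 with h0 | h0
      · nlinarith [mul_pos hb hc, mul_pos hx0 hb, mul_pos hx0 hc,
          mul_nonneg hb.le (by linarith : 0 ≤ -lam),
          mul_nonneg (mul_pos hb hc).le (by linarith : 0 ≤ lam + 1 / 2)]
      · positivity
    nlinarith [mul_nonneg (mul_pos hb hc).le h]
  · rw [← mul_pow]
    refine second_derivative_factor_nonneg hlam hc (mul_pos hx0 hb) (add_pos hx0 hb) fun h0 h1 => ?_
    nlinarith [mul_pos hx0 hb, mul_pos hx0 hc, mul_pos hb hc, mul_nonneg hb.le h0]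
  · have h : 0 ≤ lam * (x * (x + lam / 2)) + (x + lam) * (x + (x + lam / 2)) := by
      rcases lt_or_ge lam 0 with h0 | h0
      · nlinarith [mul_pos hx0 hb, mul_pos hx0 hc, mul_pos hb hc,
          mul_nonneg (mul_pos hx0 hb).le (by linarith : 0 ≤ lam + 1 / 2)]
      · positivity
    nlinarith [mul_nonneg (mul_pos hx0 hb).le h]
end

section
/- Let r ≥ 1, let α_1, …, α_r > 0 be real numbers with s = Σ_{i=1}^{r} α_i, let γ_1, …, γ_r be real numbers with γ_min ≤ γ_i ≤ γ_max for all i, where γ_min = min_i γ_i and γ_max = max_i γ_i, and set f(x) = (x+γ_1)^{α_1}(x+γ_2)^{α_2}⋯(x+γ_r)^{α_r}. Then for all real x > x_0 with x_0 + γ_min ≥ 0: (1/(s+1))·[(x+γ_min)f(x) − (x_0+γ_min)f(x_0)] ≤ ∫_{x_0}^{x} f(t) dt ≤ (1/(s+1))·(x+γ_max)f(x). -/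
section ShiftedPowers

variable {ι : Type*} [Fintype ι] {α γ : ι → ℝ}

theorem continuous_prod_add_rpow (hα : ∀ i, 0 < α i) :
    Continuous fun t : ℝ => ∏ i, (t + γ i) ^ α i :=
  continuous_finsetProd _ fun i _ =>
    (continuous_id.add continuous_const).rpow_const fun _ => Or.inr (hα i).le

theorem hasDerivAt_prod_add_rpow {t : ℝ} (ht : ∀ i, 0 < t + γ i) :
    HasDerivAt (fun t : ℝ => ∏ i, (t + γ i) ^ α i)
      ((∏ i, (t + γ i) ^ α i) * ∑ i, α i / (t + γ i)) t := by
  classical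
  have h := HasDerivAt.fun_finsetProd (u := Finset.univ) (x := t)
    (f := fun i (t : ℝ) => (t + γ i) ^ α i) (f' := fun i => 1 * α i * (t + γ i) ^ (α i - 1))
    fun i _ => ((hasDerivAt_id t).add_const (γ i)).rpow_const (Or.inl (ht i).ne')
  refine h.congr_deriv ?_
  rw [Finset.mul_sum]
  refine Finset.sum_congr rfl fun i hi => ?_
  rw [← Finset.prod_erase_mul _ _ hi, Real.rpow_sub_one (ht i).ne', smul_eq_mul]
  ring

/-- The difference between `(s + 1) ∫ f` and `(t + c) f t`, where `f t = ∏ i, (t + γ i) ^ α i` and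
`s = ∑ i, α i`, has a derivative whose sign is governed by the signs of the `γ i - c`. -/
theorem hasDerivAt_integral_sub_add_mul_prod (hα : ∀ i, 0 < α i) (c x₀ : ℝ) {t : ℝ}
    (ht : ∀ i, 0 < t + γ i) :
    HasDerivAt (fun y : ℝ => (∑ i, α i + 1) * (∫ u in x₀..y, ∏ i, (u + γ i) ^ α i)
        - (y + c) * ∏ i, (y + γ i) ^ α i)
      ((∏ i, (t + γ i) ^ α i) * ∑ i, α i * (γ i - c) / (t + γ i)) t := by
  have hf := continuous_prod_add_rpow (γ := γ) hα
  have hint := (hf.integral_hasStrictDerivAt x₀ t).hasDerivAt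
  refine ((hint.const_mul (∑ i, α i + 1)).sub
    (((hasDerivAt_id t).add_const c).mul (hasDerivAt_prod_add_rpow ht))).congr_deriv ?_
  have hsum : ∑ i, α i * (γ i - c) / (t + γ i)
      = ∑ i, α i - (t + c) * ∑ i, α i / (t + γ i) := by
    rw [Finset.mul_sum, ← Finset.sum_sub_distrib]
    refine Finset.sum_congr rfl fun i _ => ?_
    have := (ht i).ne'
    field_simp
    ring
  rw [hsum, id]
  ring

theorem continuous_integral_sub_add_mul_prod (hα : ∀ i, 0 < α i) (c x₀ : ℝ) :
    Continuous fun y : ℝ => (∑ i, α i + 1) * (∫ u in x₀..y, ∏ i, (u + γ i) ^ α i)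
      - (y + c) * ∏ i, (y + γ i) ^ α i := by
  have hf := continuous_prod_add_rpow (γ := γ) hα
  have hint : Continuous fun y : ℝ => ∫ u in x₀..y, ∏ i, (u + γ i) ^ α i :=
    intervalIntegral.continuous_primitive (fun a b => hf.intervalIntegrable a b) x₀
  fun_prop

theorem add_mul_prod_sub_le_integral (hα : ∀ i, 0 < α i) {c x₀ x : ℝ} (hc : ∀ i, c ≤ γ i)
    (h₀ : ∀ i, 0 ≤ x₀ + γ i) (hx : x₀ ≤ x) :
    (x + c) * (∏ i, (x + γ i) ^ α i) - (x₀ + c) * ∏ i, (x₀ + γ i) ^ α i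
      ≤ (∑ i, α i + 1) * ∫ t in x₀..x, ∏ i, (t + γ i) ^ α i := by
  have hmono := monotoneOn_of_hasDerivWithinAt_nonneg (convex_Icc x₀ x)
    (continuous_integral_sub_add_mul_prod (γ := γ) hα c x₀).continuousOn
    (f' := fun t => (∏ i, (t + γ i) ^ α i) * ∑ i, α i * (γ i - c) / (t + γ i))
    (fun t ht => by
      rw [interior_Icc] at ht
      exact (hasDerivAt_integral_sub_add_mul_prod hα c x₀
        fun i => by linarith [h₀ i, ht.1]).hasDerivWithinAt)
    (fun t ht => by
      rw [interior_Icc] at ht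
      have hpos : ∀ i, 0 < t + γ i := fun i => by linarith [h₀ i, ht.1]
      exact mul_nonneg (Finset.prod_nonneg fun i _ => Real.rpow_nonneg (hpos i).le _)
        (Finset.sum_nonneg fun i _ =>
          div_nonneg (mul_nonneg (hα i).le (sub_nonneg.2 (hc i))) (hpos i).le))
  have h := hmono (Set.left_mem_Icc.2 hx) (Set.right_mem_Icc.2 hx) hx
  simp only [intervalIntegral.integral_same] at h
  linarith

theorem integral_le_add_mul_prod_sub (hα : ∀ i, 0 < α i) {c x₀ x : ℝ} (hc : ∀ i, γ i ≤ c)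
    (h₀ : ∀ i, 0 ≤ x₀ + γ i) (hx : x₀ ≤ x) :
    (∑ i, α i + 1) * (∫ t in x₀..x, ∏ i, (t + γ i) ^ α i)
      ≤ (x + c) * (∏ i, (x + γ i) ^ α i) - (x₀ + c) * ∏ i, (x₀ + γ i) ^ α i := by
  have hanti := antitoneOn_of_hasDerivWithinAt_nonpos (convex_Icc x₀ x)
    (continuous_integral_sub_add_mul_prod (γ := γ) hα c x₀).continuousOn
    (f' := fun t => (∏ i, (t + γ i) ^ α i) * ∑ i, α i * (γ i - c) / (t + γ i))
    (fun t ht => by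
      rw [interior_Icc] at ht
      exact (hasDerivAt_integral_sub_add_mul_prod hα c x₀
        fun i => by linarith [h₀ i, ht.1]).hasDerivWithinAt)
    (fun t ht => by
      rw [interior_Icc] at ht
      have hpos : ∀ i, 0 < t + γ i := fun i => by linarith [h₀ i, ht.1]
      exact mul_nonpos_of_nonneg_of_nonpos
        (Finset.prod_nonneg fun i _ => Real.rpow_nonneg (hpos i).le _)
        (Finset.sum_nonpos fun i _ => div_nonpos_of_nonpos_of_nonneg
          (mul_nonpos_of_nonneg_of_nonpos (hα i).le (sub_nonpos.2 (hc i))) (hpos i).le))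
  have h := hanti (Set.left_mem_Icc.2 hx) (Set.right_mem_Icc.2 hx) hx
  simp only [intervalIntegral.integral_same] at h
  linarith

end ShiftedPowers

theorem integral_product_bounds (r : ℕ) (hr : 1 ≤ r) (α γ : Fin r → ℝ)
    (hα : ∀ i, 0 < α i) (γmin γmax : ℝ)
    (hmin : IsLeast (Set.range γ) γmin) (hmax : IsGreatest (Set.range γ) γmax)
    (x₀ x : ℝ) (hx₀ : 0 ≤ x₀ + γmin) (hx : x₀ < x) :
    1/(∑ i, α i + 1) *
        ((x + γmin) * (∏ i, (x + γ i) ^ (α i)) - (x₀ + γmin) * ∏ i, (x₀ + γ i) ^ (α i))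
      ≤ (∫ t in x₀..x, ∏ i, (t + γ i) ^ (α i)) ∧
    (∫ t in x₀..x, ∏ i, (t + γ i) ^ (α i))
      ≤ 1/(∑ i, α i + 1) * ((x + γmax) * ∏ i, (x + γ i) ^ (α i)) := by
  have hγmin : ∀ i, γmin ≤ γ i := fun i => hmin.2 ⟨i, rfl⟩
  have hγmax : ∀ i, γ i ≤ γmax := fun i => hmax.2 ⟨i, rfl⟩
  have h₀ : ∀ i, 0 ≤ x₀ + γ i := fun i => by linarith [hγmin i]
  have hs : 0 < ∑ i, α i + 1 := by
    have := Finset.sum_nonneg fun i (_ : i ∈ Finset.univ) => (hα i).le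
    linarith
  rw [one_div, inv_mul_le_iff₀ hs, le_inv_mul_iff₀ hs]
  refine ⟨add_mul_prod_sub_le_integral hα hγmin h₀ hx.le,
    (integral_le_add_mul_prod_sub hα hγmax h₀ hx.le).trans (sub_le_self _ ?_)⟩
  have hc : 0 ≤ x₀ + γmax := by linarith [hmax.2 hmin.1]
  exact mul_nonneg hc (Finset.prod_nonneg fun i _ => Real.rpow_nonneg (h₀ i) _)
end

section
/- Let λ > 2 and m ≥ 1. Then the maximum absolute row-sum norm of the matrix A_m satisfies ‖A_m‖_∞ ≤ (4/((λ+2)(λ+3)))·m(m + λ/2)(m + λ)(m + 3λ/2 + 3). -/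
namespace GegenbauerRowSum

/-- The partial sums `Σ_{i=1}^{k} α_i²`. -/
noncomputable def alphaSqSum (lam : ℝ) (k : ℕ) : ℝ :=
  ∑ i ∈ Finset.Icc 1 k, (gegAlpha lam i)^2

/-- The partial sum over `j ≤ m` of the `k`-th row of the infinite matrix extending every `A_m`. -/
noncomputable def rowSum (lam : ℝ) (k m : ℕ) : ℝ :=
  ∑ j ∈ Finset.Icc 1 m, alphaSqSum lam (min k j) * gegBeta lam k * gegBeta lam j

variable {lam : ℝ}

lemma hsq_pos (hlam : 0 < lam) {x : ℝ} (hx : 0 ≤ x) : 0 < hsq lam x :=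
  div_pos (Real.Gamma_pos_of_pos (by linarith))
    (mul_pos (by linarith) (Real.Gamma_pos_of_pos (by linarith)))

lemma gegAlpha_sq (hlam : 0 < lam) {k : ℕ} (hk : 1 ≤ k) :
    (gegAlpha lam k)^2 =
      (2*(k:ℝ) - 1 + lam) * Real.Gamma (2*k - 1 + 2*lam) / Real.Gamma (2*k) := by
  have hk' : (1:ℝ) ≤ k := by exact_mod_cast hk
  have hne : 2*(k:ℝ) - 1 + lam ≠ 0 := by linarith
  have hG : Real.Gamma (2*(k:ℝ)) ≠ 0 := (Real.Gamma_pos_of_pos (by linarith)).ne'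
  rw [gegAlpha, mul_pow, Real.sq_sqrt (hsq_pos hlam (by linarith)).le, hsq, sub_add_cancel]
  field_simp

lemma gegBeta_pos (hlam : 0 < lam) (k : ℕ) : 0 < gegBeta lam k :=
  one_div_pos.2 (Real.sqrt_pos.2 (hsq_pos hlam (by positivity)))

lemma gegBeta_sq (hlam : 0 < lam) (k : ℕ) :
    (gegBeta lam k)^2 =
      (2*(k:ℝ) + lam) * Real.Gamma (2*k + 1) / Real.Gamma (2*k + 2*lam) := by
  rw [gegBeta, div_pow, Real.sq_sqrt (hsq_pos hlam (by positivity)).le, hsq, one_pow, one_div_div]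

lemma alphaSqSum_nonneg (k : ℕ) : 0 ≤ alphaSqSum lam k :=
  Finset.sum_nonneg fun _ _ => sq_nonneg _

lemma alphaSqSum_succ (k : ℕ) :
    alphaSqSum lam (k + 1) = alphaSqSum lam k + (gegAlpha lam (k + 1))^2 :=
  Finset.sum_Icc_succ_top (by omega) _

lemma Gamma_add_two {x : ℝ} (hx : 0 < x) :
    Real.Gamma (x + 2) = (x + 1) * x * Real.Gamma x := by
  rw [show x + 2 = (x + 1) + 1 by ring, Real.Gamma_add_one (by linarith),
    Real.Gamma_add_one hx.ne', mul_assoc]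

lemma alphaSqSum_eq (hlam : 0 < lam) {k : ℕ} (hk : 1 ≤ k) :
    alphaSqSum lam k =
      Real.Gamma (2*k + 1 + 2*lam) / (2 * (2*lam + 1) * Real.Gamma (2*k)) := by
  induction k, hk using Nat.le_induction with
  | base =>
    have h := Gamma_add_two (x := 1 + 2*lam) (by linarith)
    rw [show alphaSqSum lam 1 = (gegAlpha lam 1)^2 by simp [alphaSqSum],
      gegAlpha_sq hlam le_rfl]
    push_cast
    rw [show (2*1 + 1 + 2*lam : ℝ) = 1 + 2*lam + 2 by ring, h,
      show (2*1 - 1 + 2*lam : ℝ) = 1 + 2*lam by ring]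
    have hG : Real.Gamma (2*1 : ℝ) ≠ 0 := (Real.Gamma_pos_of_pos (by norm_num)).ne'
    field_simp
    ring
  | succ k hk ih =>
    have hk' : (1:ℝ) ≤ k := by exact_mod_cast hk
    have h1 := Gamma_add_two (x := 2*k + 1 + 2*lam) (by linarith)
    have h2 := Gamma_add_two (x := 2*k) (by linarith)
    rw [alphaSqSum_succ, ih, gegAlpha_sq hlam (by omega)]
    push_cast
    rw [show (2*((k:ℝ)+1) + 1 + 2*lam : ℝ) = 2*k + 1 + 2*lam + 2 by ring, h1,
      show (2*((k:ℝ)+1) - 1 + 2*lam : ℝ) = 2*k + 1 + 2*lam by ring,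
      show (2*((k:ℝ)+1) : ℝ) = 2*k + 2 by ring, h2]
    have hG : Real.Gamma (2*k : ℝ) ≠ 0 := (Real.Gamma_pos_of_pos (by linarith)).ne'
    field_simp
    ring

/-- The diagonal entries of `A_m`. -/
lemma alphaSqSum_mul_gegBeta_sq (hlam : 0 < lam) {k : ℕ} (hk : 1 ≤ k) :
    alphaSqSum lam k * (gegBeta lam k)^2 =
      4 * (k * (k + lam/2) * (k + lam)) / (2*lam + 1) := by
  have hk' : (1:ℝ) ≤ k := by exact_mod_cast hk
  rw [alphaSqSum_eq hlam hk, gegBeta_sq hlam,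
    show (2*k + 1 + 2*lam : ℝ) = (2*k + 2*lam) + 1 by ring,
    Real.Gamma_add_one (by linarith), Real.Gamma_add_one (by linarith)]
  have h1 : Real.Gamma (2*k : ℝ) ≠ 0 := (Real.Gamma_pos_of_pos (by linarith)).ne'
  have h2 : Real.Gamma (2*k + 2*lam : ℝ) ≠ 0 := (Real.Gamma_pos_of_pos (by linarith)).ne'
  field_simp
  ring

lemma gegBeta_sq_succ (hlam : 0 < lam) {k : ℕ} (hk : 1 ≤ k) :
    (gegBeta lam (k+1))^2 * ((2*k + lam) * (k + lam) * (2*k + 2*lam + 1)) =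
      (gegBeta lam k)^2 * ((2*k + 2 + lam) * (2*k + 1) * (k + 1)) := by
  have hk' : (1:ℝ) ≤ k := by exact_mod_cast hk
  have h1 := Gamma_add_two (x := 2*k + 1) (by linarith)
  have h2 := Gamma_add_two (x := 2*k + 2*lam) (by linarith)
  rw [gegBeta_sq hlam, gegBeta_sq hlam]
  push_cast
  rw [show (2*((k:ℝ)+1) + 1 : ℝ) = 2*k + 1 + 2 by ring, h1,
    show (2*((k:ℝ)+1) + 2*lam : ℝ) = 2*k + 2*lam + 2 by ring, h2]
  have h3 : Real.Gamma (2*k + 2*lam : ℝ) ≠ 0 := (Real.Gamma_pos_of_pos (by linarith)).ne'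
  field_simp
  ring

lemma add_mul_gegBeta_succ_le (hlam : 1 ≤ lam) {k : ℕ} (hk : 1 ≤ k) :
    (k + lam) * gegBeta lam (k+1) ≤ (k + 1) * gegBeta lam k := by
  have h0 : 0 < lam := by linarith
  have hk' : (1:ℝ) ≤ k := by exact_mod_cast hk
  have hb := gegBeta_pos h0 k
  have hb' := gegBeta_pos h0 (k+1)
  have hrec := gegBeta_sq_succ h0 hk
  set x : ℝ := (k:ℝ)
  have hD : 0 < (2*x + lam) * (x + lam) * (2*x + 2*lam + 1) := by positivity
  have hpoly : (x + lam) * ((2*x + 2 + lam) * (2*x + 1)) ≤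
      (x + 1) * ((2*x + lam) * (2*x + 2*lam + 1)) := by nlinarith
  rw [← sq_le_sq₀ (by positivity) (by positivity), ← mul_le_mul_iff_left₀ hD]
  calc ((x + lam) * gegBeta lam (k+1))^2 * ((2*x + lam) * (x + lam) * (2*x + 2*lam + 1))
      = (gegBeta lam k)^2 * (x + lam) * (x + 1) *
          ((x + lam) * ((2*x + 2 + lam) * (2*x + 1))) := by linear_combination (x + lam)^2 * hrec
    _ ≤ (gegBeta lam k)^2 * (x + lam) * (x + 1) *
          ((x + 1) * ((2*x + lam) * (2*x + 2*lam + 1))) := by gcongr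
    _ = _ := by ring

lemma add_mul_alphaSqSum_mul_gegBeta_le (hlam : 0 < lam) {k : ℕ} (hk : 1 ≤ k) :
    (k + lam + 2) * (alphaSqSum lam k * gegBeta lam k) ≤
      k * (alphaSqSum lam (k+1) * gegBeta lam (k+1)) := by
  have hk' : (1:ℝ) ≤ k := by exact_mod_cast hk
  have hb := gegBeta_pos hlam k
  have hb' := gegBeta_pos hlam (k+1)
  have hrec := gegBeta_sq_succ hlam hk
  have hT := alphaSqSum_mul_gegBeta_sq hlam hk
  have hT' := alphaSqSum_mul_gegBeta_sq hlam (k := k+1) (by omega)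
  push_cast at hT'
  set x : ℝ := (k:ℝ)
  set b := gegBeta lam k
  set b' := gegBeta lam (k+1)
  have hD : 0 < (2*x + lam) * (x + lam) * (2*x + 2*lam + 1) := by positivity
  have hpoly : (x + lam) * (2*x + lam) * (x + lam + 2)^2 * (2*x + 1) ≤
      (x + 1) * (x + 1 + lam)^2 * (2*x + 2 + lam) * (2*x + 2*lam + 1) := by
    rw [← sub_nonneg]
    ring_nf
    positivity
  have key : (x + lam + 2) * ((x + lam/2) * (x + lam)) * b' ≤
      ((x + 1) * (x + 1 + lam/2) * (x + 1 + lam)) * b := by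
    rw [← sq_le_sq₀ (by positivity) (by positivity), ← mul_le_mul_iff_left₀ hD]
    calc _ = b^2 * ((2*x + 2 + lam) * (2*x + lam) * (x + lam) * (x + 1)) / 4 *
            ((x + lam) * (2*x + lam) * (x + lam + 2)^2 * (2*x + 1)) := by
          linear_combination ((x + lam + 2) * ((x + lam/2) * (x + lam)))^2 * hrec
      _ ≤ b^2 * ((2*x + 2 + lam) * (2*x + lam) * (x + lam) * (x + 1)) / 4 *
            ((x + 1) * (x + 1 + lam)^2 * (2*x + 2 + lam) * (2*x + 2*lam + 1)) := by gcongr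
      _ = _ := by ring
  rw [← mul_le_mul_iff_left₀ (mul_pos hb hb')]
  calc _ = (x + lam + 2) * (alphaSqSum lam k * b^2) * b' := by ring
    _ = 4 * x / (2*lam + 1) * ((x + lam + 2) * ((x + lam/2) * (x + lam)) * b') := by
        rw [hT]; ring
    _ ≤ 4 * x / (2*lam + 1) * (((x + 1) * (x + 1 + lam/2) * (x + 1 + lam)) * b) := by gcongr
    _ = x * (alphaSqSum lam (k+1) * b'^2) * b := by rw [hT']; ring
    _ = _ := by ring

lemma sum_alphaSqSum_mul_gegBeta_le (hlam : 0 < lam) {k : ℕ} (hk : 1 ≤ k) :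
    (lam + 3) * ∑ j ∈ Finset.Icc 1 k, alphaSqSum lam j * gegBeta lam j ≤
      (k + lam + 2) * (alphaSqSum lam k * gegBeta lam k) := by
  induction k, hk using Nat.le_induction with
  | base => simp; exact le_of_eq (by ring)
  | succ k hk ih =>
    rw [Finset.sum_Icc_succ_top (by omega)]
    have := add_mul_alphaSqSum_mul_gegBeta_le hlam hk
    push_cast
    linarith

lemma rowSum_succ {k m : ℕ} (hkm : k ≤ m) :
    rowSum lam k (m+1) =
      rowSum lam k m + alphaSqSum lam k * gegBeta lam k * gegBeta lam (m+1) := by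
  rw [rowSum, Finset.sum_Icc_succ_top (by omega), min_eq_left (by omega), ← rowSum]

lemma rowSum_self_le (hlam : 0 < lam) {k : ℕ} (hk : 1 ≤ k) :
    (lam + 3) * rowSum lam k k ≤ (k + lam + 2) * (alphaSqSum lam k * (gegBeta lam k)^2) := by
  have h : rowSum lam k k =
      (∑ j ∈ Finset.Icc 1 k, alphaSqSum lam j * gegBeta lam j) * gegBeta lam k := by
    rw [rowSum, Finset.sum_mul]
    refine Finset.sum_congr rfl fun j hj => ?_
    rw [min_eq_right (Finset.mem_Icc.1 hj).2]
    ring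
  have := mul_le_mul_of_nonneg_right (sum_alphaSqSum_mul_gegBeta_le hlam hk)
    (gegBeta_pos hlam k).le
  rw [h]
  linarith

lemma rowSum_le_rowSum_self_add (hlam : 2 < lam) {k m : ℕ} (hk : 1 ≤ k) (hkm : k ≤ m) :
    (lam - 2) * rowSum lam k m ≤ (lam - 2) * rowSum lam k k +
      alphaSqSum lam k * gegBeta lam k * ((k + 1) * gegBeta lam k - (m + 1) * gegBeta lam m) := by
  induction m, hkm using Nat.le_induction with
  | base => simp
  | succ m hkm ih =>
    have hnn : 0 ≤ alphaSqSum lam k * gegBeta lam k :=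
      mul_nonneg (alphaSqSum_nonneg k) (gegBeta_pos (by linarith) k).le
    have := mul_le_mul_of_nonneg_left
      (add_mul_gegBeta_succ_le (lam := lam) (by linarith) (hk.trans hkm)) hnn
    rw [rowSum_succ hkm]
    push_cast
    linarith

/-- For `k ≤ m` the `k`-th row sum obeys the bound. If the last entry is at most
`4 * m * (m + λ/2) * (m + λ) * (4 / ((λ+2)(λ+3)))`, the increment of the bound absorbs it;
otherwise the telescoped estimate of the tail of the row suffices. -/
lemma rowSum_le_of_le (hlam : 2 < lam) {k m : ℕ} (hk : 1 ≤ k) (hkm : k ≤ m) :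
    rowSum lam k m ≤ 4/((lam + 2) * (lam + 3)) *
      ((m : ℝ) * (m + lam/2) * (m + lam) * (m + 3*lam/2 + 3)) := by
  have h0 : 0 < lam := by linarith
  have hk' : (1:ℝ) ≤ k := by exact_mod_cast hk
  have hT := alphaSqSum_mul_gegBeta_sq h0 hk
  have hself := rowSum_self_le h0 hk
  rw [hT] at hself
  induction m, hkm using Nat.le_induction with
  | base =>
    have h3 : (k:ℝ) + lam + 2 ≤ k + 3*lam/2 + 3 := by linarith
    have h4 : lam + 2 ≤ 2*lam + 1 := by linarith
    calc rowSum lam k k ≤ (k + lam + 2) * (4 * (k * (k + lam/2) * (k + lam)) / (2*lam + 1)) /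
          (lam + 3) := by rw [le_div_iff₀ (by linarith)]; linarith
      _ = 4 / ((2*lam + 1) * (lam + 3)) * ((k * (k + lam/2) * (k + lam)) * (k + lam + 2)) := by
          field_simp
      _ ≤ _ := by gcongr
  | succ m hkm ih =>
    have hm' : (k:ℝ) ≤ m := by exact_mod_cast hkm
    rw [rowSum_succ hkm]
    have htail := rowSum_le_rowSum_self_add hlam hk (hkm.trans m.le_succ)
    rw [rowSum_succ hkm] at htail
    push_cast at htail ⊢
    set e := alphaSqSum lam k * gegBeta lam k * gegBeta lam (m+1) with he
    set p := 4/((lam + 2) * (lam + 3)) with hp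
    have hp0 : 0 < p := by positivity
    set x : ℝ := (k:ℝ)
    set y : ℝ := m + 1 with hy
    have hxy : x ≤ y := by linarith
    rcases le_or_gt e (p * (4 * (y * (y + lam/2) * (y + lam)))) with hle | hgt
    · have hinc : (m:ℝ) * (m + lam/2) * (m + lam) * (m + 3*lam/2 + 3) +
          4 * (y * (y + lam/2) * (y + lam)) ≤
          y * (y + lam/2) * (y + lam) * (y + 3*lam/2 + 3) := by
        have hmnn : (0:ℝ) ≤ m := by linarith
        rw [hy, ← sub_nonneg]
        ring_nf
        positivity
      have := mul_le_mul_of_nonneg_left hinc hp0.le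
      linarith
    · have hcoef : (lam + 2) * (lam^2 + lam - 1) ≤
          (2*lam + 1) * ((lam - 2) * (3*lam/2 + 3) + 4) := by nlinarith
      have hdiag : (lam - 2) * rowSum lam k k +
          4 * (x * (x + lam/2) * (x + lam)) / (2*lam + 1) * (x + 1) ≤
          p * (x * (x + lam/2) * (x + lam) * ((lam - 2) * (x + 3*lam/2 + 3) + 4 * (x + 1))) := by
        have h5 : rowSum lam k k ≤
            (x + lam + 2) * (4 * (x * (x + lam/2) * (x + lam)) / (2*lam + 1)) / (lam + 3) := by
          rw [le_div_iff₀ (by linarith)]; linarith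
        have h6 : (lam - 2) * (x + lam + 2) + (lam + 3) * (x + 1) ≤
            (2*lam + 1) / (lam + 2) * ((lam - 2) * (x + 3*lam/2 + 3) + 4 * (x + 1)) := by
          rw [div_mul_eq_mul_div, le_div_iff₀ (by linarith)]
          nlinarith
        calc _ ≤ (lam - 2) * ((x + lam + 2) *
                (4 * (x * (x + lam/2) * (x + lam)) / (2*lam + 1)) / (lam + 3)) +
              4 * (x * (x + lam/2) * (x + lam)) / (2*lam + 1) * (x + 1) := by
              gcongr
          _ = 4 * (x * (x + lam/2) * (x + lam)) / ((2*lam + 1) * (lam + 3)) *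
                ((lam - 2) * (x + lam + 2) + (lam + 3) * (x + 1)) := by
              field_simp
          _ ≤ 4 * (x * (x + lam/2) * (x + lam)) / ((2*lam + 1) * (lam + 3)) *
                ((2*lam + 1) / (lam + 2) * ((lam - 2) * (x + 3*lam/2 + 3) + 4 * (x + 1))) := by
              gcongr
          _ = _ := by rw [hp]; field_simp
      have hl2 : 0 < lam - 2 := by linarith
      have hmono : p * (x * (x + lam/2) * (x + lam) *
            ((lam - 2) * (x + 3*lam/2 + 3) + 4 * (x + 1))) ≤
          p * (y * (y + lam/2) * (y + lam) *
            ((lam - 2) * (y + 3*lam/2 + 3) + 4 * (y + 1))) := by gcongr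
      have hlast := mul_le_mul_of_nonneg_right hgt.le (show 0 ≤ y + 1 by linarith)
      have hexp : alphaSqSum lam k * gegBeta lam k *
          ((x + 1) * gegBeta lam k - (y + 1) * gegBeta lam (m+1)) =
          4 * (x * (x + lam/2) * (x + lam)) / (2*lam + 1) * (x + 1) - e * (y + 1) := by
        rw [← hT, he]; ring
      rw [hexp] at htail
      refine le_of_mul_le_mul_left ?_ hl2
      linarith

lemma abs_Amat (hlam : 0 < lam) {m : ℕ} (k j : Fin m) :
    |Amat lam m k j| = alphaSqSum lam (min (k.val+1) (j.val+1)) *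
      gegBeta lam (k.val+1) * gegBeta lam (j.val+1) :=
  abs_of_nonneg (mul_nonneg (mul_nonneg (alphaSqSum_nonneg _) (gegBeta_pos hlam _).le)
    (gegBeta_pos hlam _).le)

lemma sum_abs_Amat (hlam : 0 < lam) {m : ℕ} (k : Fin m) :
    ∑ j, |Amat lam m k j| = rowSum lam (k.val+1) m := by
  simp_rw [abs_Amat hlam]
  rw [Fin.sum_univ_eq_sum_range (fun j => alphaSqSum lam (min (k.val+1) (j+1)) *
    gegBeta lam (k.val+1) * gegBeta lam (j+1)) m, rowSum, Finset.range_eq_Ico,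
    Finset.sum_Ico_add' (fun j => alphaSqSum lam (min (k.val+1) j) *
    gegBeta lam (k.val+1) * gegBeta lam j) 0 m 1]
  rfl

end GegenbauerRowSum

theorem Amat_rowSumNorm_bound (lam : ℝ) (hlam : 2 < lam) (m : ℕ) (hm : 1 ≤ m) :
    rowSumNorm (Amat lam m) ≤
      4/((lam + 2) * (lam + 3)) *
        ((m : ℝ) * ((m : ℝ) + lam/2) * ((m : ℝ) + lam) * ((m : ℝ) + 3*lam/2 + 3)) := by
  have : Nonempty (Fin m) := ⟨⟨0, hm⟩⟩
  refine ciSup_le fun k => ?_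
  rw [GegenbauerRowSum.sum_abs_Amat (by linarith)]
  exact GegenbauerRowSum.rowSum_le_of_le hlam (by omega) k.isLt
end
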